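/- arXiv:1707.01783 — 3 statements merged into one kernel-verified Lean document; each statement's English description precedes it below -/
import Mathlib

section
/- Discrete sewing lemma: Let (𝒳,‖·‖) be a Banach space, μ > 1, n ≥ 1, and 0 = t_0 < t_1 < ⋯ < t_n = 1 a partition of [0,1]. Let R assign to every pair of partition points s ≤ t an element R_{st} ∈ 𝒳 such that R_{ss} = 0 for all partition points s and R_{t_k t_{k+1}} = 0 for every k = 0,…,n−1. Then sup_{s<t partition points} ‖R_{st}‖/(t−s)^μ ≤ K_μ · sup_{s<u<t partition points} ‖δR_{sut}‖/(t−s)^μ, where δR_{sut} = R_{st} − R_{su} − R_{ut} and K_μ = 2^μ · Σ_{l=1}^∞ l^{−μ}. -/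
open Filter

noncomputable section

/-!
Young's point-removal argument. For a chain of `m + 2` intervals with end points at distance `T`,
the `m + 1` lengths of pairs of adjacent intervals add up to at most `2 T`, so some interior point
lies between neighbours at distance at most `2 T / (m + 1)` (`exists_short_pair`). Removing that
point changes the Riemann-type sum `∑ R` along the chain by one value of `δR`
(`sum_removePoint`), of norm at most `B (2 T / (m + 1)) ^ μ`. Removing all interior points one
after the other compares `R` between the end points with `∑ R` along the chain at the cost
`2 ^ μ B T ^ μ ∑ l ^ (-μ)` (`norm_sub_sum_le`). Along consecutive partition points `∑ R` vanishes.
-/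

/-- The chain `p` with its point of index `a + 1` left out. -/
def removePoint (p : ℕ → ℕ) (a : ℕ) : ℕ → ℕ := fun i => if i ≤ a then p i else p (i + 1)

lemma removePoint_of_le {p : ℕ → ℕ} {a i : ℕ} (h : i ≤ a) : removePoint p a i = p i :=
  if_pos h

lemma removePoint_of_lt {p : ℕ → ℕ} {a i : ℕ} (h : a < i) : removePoint p a i = p (i + 1) :=
  if_neg (by omega)

lemma sum_removePoint {E : Type*} [AddCommGroup E] (R : ℕ → ℕ → E) (p : ℕ → ℕ) {a m : ℕ}
    (ha : a ≤ m) :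
    ∑ i ∈ Finset.range (m + 2), R (p i) (p (i + 1)) =
      ∑ i ∈ Finset.range (m + 1), R (removePoint p a i) (removePoint p a (i + 1))
        - (R (p a) (p (a + 2)) - R (p a) (p (a + 1)) - R (p (a + 1)) (p (a + 2))) := by
  obtain ⟨b, rfl⟩ := Nat.exists_eq_add_of_le ha
  have h1 : a + b + 2 = (a + 2) + b := by ring
  have h2 : a + b + 1 = (a + 1) + b := by ring
  rw [h1, h2, Finset.sum_range_add _ (a + 2), Finset.sum_range_add _ (a + 1),
    Finset.sum_range_succ _ (a + 1), Finset.sum_range_succ _ a, Finset.sum_range_succ _ a]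
  have hL : ∑ i ∈ Finset.range a, R (removePoint p a i) (removePoint p a (i + 1)) =
      ∑ i ∈ Finset.range a, R (p i) (p (i + 1)) := by
    refine Finset.sum_congr rfl fun i hi => ?_
    have := Finset.mem_range.1 hi
    rw [removePoint_of_le (by omega), removePoint_of_le (by omega)]
  have hR : ∑ i ∈ Finset.range b,
        R (removePoint p a (a + 1 + i)) (removePoint p a (a + 1 + i + 1)) =
      ∑ i ∈ Finset.range b, R (p (a + 2 + i)) (p (a + 2 + i + 1)) := by
    refine Finset.sum_congr rfl fun i _ => ?_
    rw [removePoint_of_lt (by omega), removePoint_of_lt (by omega),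
      show a + 1 + i + 1 = a + 2 + i by ring]
  rw [hL, hR, removePoint_of_le le_rfl, removePoint_of_lt (Nat.lt_succ_self a)]
  abel

lemma exists_short_pair (x : ℕ → ℝ) (m : ℕ) (h0 : x 0 ≤ x 1) (h1 : x (m + 1) ≤ x (m + 2)) :
    ∃ a ≤ m, x (a + 2) - x a ≤ 2 * (x (m + 2) - x 0) / (m + 1) := by
  have htel : ∑ a ∈ Finset.range (m + 1), (x (a + 2) - x a) =
      (x (m + 2) - x 1) + (x (m + 1) - x 0) := by
    rw [← Finset.sum_range_sub x (m + 1), ← Finset.sum_range_sub (fun i => x (i + 1)) (m + 1),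
      ← Finset.sum_add_distrib]
    refine Finset.sum_congr rfl fun a _ => ?_
    ring
  have hle : ∑ a ∈ Finset.range (m + 1), (x (a + 2) - x a) ≤
      ∑ _a ∈ Finset.range (m + 1), 2 * (x (m + 2) - x 0) / (m + 1) := by
    rw [htel, Finset.sum_const, Finset.card_range, nsmul_eq_mul]
    push_cast
    rw [mul_div_cancel₀ _ (by positivity)]
    linarith
  obtain ⟨a, ha, h⟩ := Finset.exists_le_of_sum_le ⟨0, by simp⟩ hle
  exact ⟨a, by have := Finset.mem_range.1 ha; omega, h⟩

/-- Removing the `m` interior points of a chain one after the other costs at most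
`2 ^ μ B T ^ μ (1 ^ (-μ) + ⋯ + m ^ (-μ))`. -/
lemma norm_sub_sum_le {E : Type*} [NormedAddCommGroup E] {μ : ℝ} (hμ : 0 ≤ μ) {n : ℕ}
    {t : ℕ → ℝ} (hmono : ∀ i j : ℕ, i < j → j ≤ n → t i < t j) {R : ℕ → ℕ → E}
    {B : ℝ} (hB : 0 ≤ B)
    (hδ : ∀ i j k : ℕ, i < j → j < k → k ≤ n →
      ‖R i k - R i j - R j k‖ ≤ B * (t k - t i) ^ μ) (m : ℕ) :
    ∀ p : ℕ → ℕ, (∀ i ≤ m, p i < p (i + 1)) → (∀ i ≤ m + 1, p i ≤ n) →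
      ‖R (p 0) (p (m + 1)) - ∑ i ∈ Finset.range (m + 1), R (p i) (p (i + 1))‖ ≤
        (2 ^ μ * ∑ l ∈ Finset.range m, ((l : ℝ) + 1) ^ (-μ)) * B
          * (t (p (m + 1)) - t (p 0)) ^ μ := by
  induction m with
  | zero => intro p _ _; simp
  | succ m ih =>
    intro p hp hn
    have hstep : ∀ i ≤ m + 1, t (p i) < t (p (i + 1)) := fun i hi =>
      hmono _ _ (hp i hi) (hn _ (by omega))
    obtain ⟨a, ha, hshort⟩ := exists_short_pair (fun i => t (p i)) m
      (hstep 0 (by omega)).le (hstep (m + 1) le_rfl).le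
    have hq := ih (removePoint p a)
      (by
        intro i hi
        rcases lt_trichotomy i a with h | rfl | h
        · rw [removePoint_of_le h.le, removePoint_of_le h]
          exact hp i (by omega)
        · rw [removePoint_of_le le_rfl, removePoint_of_lt (Nat.lt_succ_self _)]
          exact (hp i (by omega)).trans (hp (i + 1) (by omega))
        · rw [removePoint_of_lt h, removePoint_of_lt (h.trans (Nat.lt_succ_self _))]
          exact hp (i + 1) (by omega))
      (by
        intro i hi
        rcases le_or_gt i a with h | h
        · rw [removePoint_of_le h]; exact hn i (by omega)
        · rw [removePoint_of_lt h]; exact hn (i + 1) (by omega))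
    rw [removePoint_of_le (Nat.zero_le a), removePoint_of_lt (show a < m + 1 by omega)] at hq
    have hT : 0 ≤ t (p (m + 2)) - t (p 0) := by
      have h : ∀ i ≤ m + 2, t (p 0) ≤ t (p i) := by
        intro i
        induction i with
        | zero => intro _; exact le_rfl
        | succ i ihi => intro hi; exact (ihi (by omega)).trans (hstep i (by omega)).le
      exact sub_nonneg.2 (h _ le_rfl)
    have hcost : ‖R (p a) (p (a + 2)) - R (p a) (p (a + 1)) - R (p (a + 1)) (p (a + 2))‖ ≤
        2 ^ μ * ((m : ℝ) + 1) ^ (-μ) * B * (t (p (m + 2)) - t (p 0)) ^ μ := by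
      have hnn : 0 ≤ t (p (a + 2)) - t (p a) := by
        linarith [hstep a (by omega), hstep (a + 1) (by omega)]
      have hm : (0 : ℝ) ≤ (m : ℝ) + 1 := by positivity
      calc _ ≤ B * (t (p (a + 2)) - t (p a)) ^ μ :=
            hδ _ _ _ (hp a (by omega)) (hp (a + 1) (by omega)) (hn _ (by omega))
        _ ≤ B * (2 * (t (p (m + 2)) - t (p 0)) / (m + 1)) ^ μ := by gcongr
        _ = _ := by
            rw [Real.div_rpow (by positivity) hm, Real.mul_rpow (by norm_num) hT,
              Real.rpow_neg hm]
            ring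
    rw [sum_removePoint R p ha, ← sub_add]
    refine (norm_add_le _ _).trans ((add_le_add hq hcost).trans (le_of_eq ?_))
    rw [Finset.sum_range_succ _ m]
    ring

/-- **Discrete sewing lemma.** For a two-parameter function `R` on the points of a
partition `0 = t 0 < t 1 < ⋯ < t n = 1` of `[0,1]` with values in a Banach space,
vanishing on the diagonal and on pairs of consecutive partition points, the bound
`‖δR_{sut}‖ ≤ B (t-s)^μ` (for partition points `s < u < t`) implies
`‖R_{st}‖ ≤ K_μ B (t-s)^μ` for all partition points `s < t`, where
`K_μ = 2^μ ∑_{l≥1} l^{-μ}`. -/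
theorem discrete_sewing_lemma
    {𝒳 : Type*} [NormedAddCommGroup 𝒳] [NormedSpace ℝ 𝒳] [CompleteSpace 𝒳]
    (μ : ℝ) (hμ : 1 < μ)
    (n : ℕ) (hn : 1 ≤ n)
    (t : ℕ → ℝ) (ht0 : t 0 = 0) (htn : t n = 1)
    (hmono : ∀ i j : ℕ, i < j → j ≤ n → t i < t j)
    (R : ℕ → ℕ → 𝒳)
    (hdiag : ∀ i, i ≤ n → R i i = 0)
    (hadj : ∀ k, k + 1 ≤ n → R k (k + 1) = 0)
    (B : ℝ) (hB : 0 ≤ B)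
    (hδ : ∀ i j k : ℕ, i < j → j < k → k ≤ n →
      ‖R i k - R i j - R j k‖ ≤ B * (t k - t i) ^ μ) :
    ∀ i j : ℕ, i < j → j ≤ n →
      ‖R i j‖ ≤ ((2 : ℝ) ^ μ * ∑' l : ℕ, ((l : ℝ) + 1) ^ (-μ)) * B * (t j - t i) ^ μ := by
  intro i j hij hj
  obtain ⟨m, rfl⟩ := Nat.exists_eq_add_of_lt hij
  have h := norm_sub_sum_le (by linarith : 0 ≤ μ) hmono hB hδ m (fun k => i + k)
    (fun k _ => by omega) (fun k _ => by omega)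
  have hzero : ∑ k ∈ Finset.range (m + 1), R (i + k) (i + (k + 1)) = 0 :=
    Finset.sum_eq_zero fun k hk => hadj (i + k) (by have := Finset.mem_range.1 hk; omega)
  have hsum : Summable fun l : ℕ => ((l : ℝ) + 1) ^ (-μ) := by
    have := (summable_nat_add_iff 1).2 (Real.summable_nat_rpow.2 (by linarith : -μ < -1))
    simpa using this
  have hT : 0 ≤ t (i + m + 1) - t i := sub_nonneg.2 (hmono _ _ hij hj).le
  rw [hzero, sub_zero, add_zero, ← add_assoc] at h
  refine h.trans ?_
  gcongr
  exact hsum.sum_le_tsum _ fun l _ => by positivity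
end
end

section
/- Let ν ∈ (0,1), α > 0, and ℓ the smallest integer with νℓ + α > 1. Let (x⁰,…,x^{ℓ−1}) be a scalar (L₂,ν,ℓ)-rough path, let (y^{(0)},…,y^{(ℓ−1)}) be controlled by (x,α) in L₂ with remainders r^{(k)} and controlled constant K₀, and for a fixed n let h assign a real random variable h_{t_k,t_{k+1}} to each pair of consecutive points of the uniform n-partition. Assume there is a constant K such that ‖J_s^t(x^i;h)‖_{L²(Ω)} ≤ K(t−s)^{α+νi} for all partition points s ≤ t and all 0 ≤ i ≤ ℓ−1. Then there is a constant K′, depending only on K, K₀, C, ν, α and ℓ (but not on n), such that ‖J_s^t(r^{(0)};h)‖_{L¹(Ω)} ≤ K′(t−s)^{νℓ+α} for all partition points s ≤ t, where J_s^t(r^{(0)};h) = Σ_{k : s ≤ t_k < t} r^{(0)}_{s,t_k} · h_{t_k,t_{k+1}}. -/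
/-!
The two-parameter process `R_{ab} = J_{t_a}^{t_b}(r⁽⁰⁾; h)` vanishes (almost everywhere) on
consecutive partition points, and Chen's relation makes its failure to be additive explicit: for
`a ≤ u ≤ b`,

  `R_{ab} - R_{au} - R_{ub} = ∑_{i < ℓ} r⁽ⁱ⁾_{t_a t_u} · J_{t_u}^{t_b}(xⁱ; h)`

(`remainder_chen`, `sum_remainder_split`). By the Cauchy-Schwarz inequality each term has `L¹` norm
at most `K₀ (t_u - t_a)^{(ℓ-i)ν} K (t_b - t_u)^{α+νi} ≤ K₀ K (t_b - t_a)^μ` with `μ = νℓ + α`.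
Since `μ > 1`, a discrete sewing argument (`discrete_sewing`) bounds `R` itself: splitting
an interval of at least two steps near its midpoint, both parts have relative length at most `2/3`,
so their `μ`-th powers add up to at most `(2/3)^{μ-1} < 1` times the `μ`-th power of the whole, and
the bound with constant `ℓ K₀ K / (1 - (2/3)^{μ-1})` propagates by induction on the
number of steps.

In the degenerate case `ℓ = 0` the truncated difference `ℓ - 1` is `0`, so a single remainder `r⁽⁰⁾` with exponent `0`
is left; to include this case the sums run over `range (ℓ - 1 + 1)`.
-/

open MeasureTheory ProbabilityTheory Filter
open scoped ENNReal NNReal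

noncomputable section

variable {Ω : Type*} [MeasurableSpace Ω]

/-- The smallest point `⌈n s⌉ / n` of the uniform `n`-partition that is `≥ s`. -/
def eps (n : ℕ) (s : ℝ) : ℝ := (⌈(n : ℝ) * s⌉ : ℝ) / n

/-- Discrete integral `J_s^t(f;h)` of a two-parameter process `f` against the
increments `h k = h_{t_k t_{k+1}}` along the uniform `n`-partition. -/
def Jtwo (n : ℕ) (f : ℝ → ℝ → Ω → ℝ) (h : ℕ → Ω → ℝ) (s t : ℝ) (ω : Ω) : ℝ :=
  ∑ k ∈ Finset.range n,
    if s ≤ (k : ℝ) / n ∧ (k : ℝ) / n < t then f (eps n s) ((k : ℝ) / n) ω * h k ω else 0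

/-- Discrete integral `J_s^t(y;h)` of a one-parameter path `y`. -/
def Jone (n : ℕ) (y : ℝ → Ω → ℝ) (h : ℕ → Ω → ℝ) (s t : ℝ) (ω : Ω) : ℝ :=
  ∑ k ∈ Finset.range n,
    if s ≤ (k : ℝ) / n ∧ (k : ℝ) / n < t then (y ((k : ℝ) / n) ω - y (eps n s) ω) * h k ω else 0

/-- A scalar `(L_p, ν, ℓ)`-rough path over the continuous process `X`. -/
def IsRoughPath (P : Measure Ω) (p : ℝ≥0∞) (ν : ℝ) (ℓ : ℕ) (C : ℝ)
    (X : ℝ → Ω → ℝ) (x : ℕ → ℝ → ℝ → Ω → ℝ) : Prop :=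
  (∀ i s t, Measurable (x i s t)) ∧
  (∀ ω, ContinuousOn (fun t => X t ω) (Set.Icc 0 1)) ∧
  (∀ s t ω, x 0 s t ω = 1) ∧
  (∀ s t ω, x 1 s t ω = X t ω - X s ω) ∧
  (∀ k, 1 ≤ k → k ≤ ℓ - 1 → ∀ s u t : ℝ, 0 ≤ s → s ≤ u → u ≤ t → t ≤ 1 → ∀ ω,
    x k s t ω = ∑ j ∈ Finset.range (k + 1), x (k - j) s u ω * x j u t ω) ∧
  (∀ k, k ≤ ℓ - 1 → ∀ s t : ℝ, 0 ≤ s → s ≤ t → t ≤ 1 →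
    eLpNorm (x k s t) p P ≤ ENNReal.ofReal ((C * (t - s) ^ ν) ^ k))

/-- `(y^{(0)},…,y^{(ℓ-1)})` is controlled by the rough path `x` in `L₂`,
with remainder constant `K₀`. -/
def Controlled (P : Measure Ω) (ν : ℝ) (ℓ : ℕ) (K₀ : ℝ)
    (x : ℕ → ℝ → ℝ → Ω → ℝ) (y : ℕ → ℝ → Ω → ℝ) : Prop :=
  (∀ k, k ≤ ℓ - 1 → ∀ t, Measurable (y k t)) ∧
  (∀ k, k ≤ ℓ - 1 → ∀ ω, ContinuousOn (fun t => y k t ω) (Set.Icc 0 1)) ∧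
  (∀ ω, y 0 0 ω = 0) ∧
  (∀ k, k ≤ ℓ - 1 → ∀ s t : ℝ, 0 ≤ s → s ≤ t → t ≤ 1 →
    eLpNorm (fun ω => y k t ω - y k s ω -
        ∑ j ∈ Finset.Icc 1 (ℓ - 1 - k), y (k + j) s ω * x j s t ω) 2 P
      ≤ ENNReal.ofReal (K₀ * (t - s) ^ (((ℓ - k : ℕ) : ℝ) * ν)))

/-- Covariance of one-dimensional fractional Brownian motion. -/
def fbmCov (ν s t : ℝ) : ℝ := (s ^ (2 * ν) + t ^ (2 * ν) - |t - s| ^ (2 * ν)) / 2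

/-- `x` is a fractional Brownian motion with Hurst parameter `ν` on `[0,1]`:
a measurable process with (a.s.) continuous sample paths all of whose finite
linear combinations are centered Gaussian with the fBm covariance. -/
def IsFBM (P : Measure Ω) (ν : ℝ) (x : ℝ → Ω → ℝ) : Prop :=
  (∀ t, Measurable (x t)) ∧
  (∀ᵐ ω ∂P, ContinuousOn (fun t => x t ω) (Set.Icc 0 1)) ∧
  ∀ (m : ℕ) (t : Fin m → ℝ), (∀ j, t j ∈ Set.Icc (0 : ℝ) 1) →
    ∀ a : Fin m → ℝ,
      P.map (fun ω => ∑ j, a j * x (t j) ω) =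
        gaussianReal 0 (∑ j, ∑ k, a j * a k * fbmCov ν (t j) (t k)).toNNReal

/-- Correlation function of the increments of fBm. -/
def rho (ν : ℝ) (k : ℤ) : ℝ :=
  (|(k : ℝ) + 1| ^ (2 * ν) + |(k : ℝ) - 1| ^ (2 * ν) - 2 * |(k : ℝ)| ^ (2 * ν)) / 2

/-- Hermite polynomial `H_q` (probabilists' normalization). -/
def Hq (q : ℕ) (t : ℝ) : ℝ := Polynomial.aeval t (Polynomial.hermite q)

/-- The increments `h^{n,q}_{t_k t_{k+1}} = H_q(n^ν δx_{t_k t_{k+1}})`. -/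
def hermIncr (x : ℝ → Ω → ℝ) (ν : ℝ) (n q : ℕ) (k : ℕ) (ω : Ω) : ℝ :=
  Hq q ((n : ℝ) ^ ν * (x (((k : ℝ) + 1) / n) ω - x ((k : ℝ) / n) ω))

/-- Canonical rough-path lift of a one-dimensional process: `x^i_{st} = (δx_{st})^i / i!`. -/
def xlift (x : ℝ → Ω → ℝ) (i : ℕ) (s t : ℝ) (ω : Ω) : ℝ :=
  (x t ω - x s ω) ^ i / (Nat.factorial i : ℝ)

/-- Hermite coefficient `a_q = (1/q!) ∫ f H_q dγ` of `f` in `L²(γ)`. -/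
def hermCoeff (f : ℝ → ℝ) (q : ℕ) : ℝ :=
  (Nat.factorial q : ℝ)⁻¹ * ∫ t, f t * Hq q t ∂(gaussianReal 0 1)

/-- `c_p = E|N|^p = 2^{p/2} Γ((p+1)/2)/√π`. -/
def cconst (r : ℝ) : ℝ := (2 : ℝ) ^ (r / 2) * Real.Gamma ((r + 1) / 2) / Real.sqrt Real.pi

/-- The remainder `r⁽ᵏ⁾_{st}` of a controlled family, with `L` in the role of `ℓ - 1`. -/
def remainder (L : ℕ) (x : ℕ → ℝ → ℝ → Ω → ℝ) (y : ℕ → ℝ → Ω → ℝ) (k : ℕ) (s t : ℝ) (ω : Ω) : ℝ :=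
  y k t ω - y k s ω - ∑ j ∈ Finset.Icc 1 (L - k), y (k + j) s ω * x j s t ω

/-- Between partition points, `Jtwo` is a plain sum over the steps in between. This includes
`n = 0`, where both sides are empty sums. -/
lemma Jtwo_grid {Ω : Type*} (n : ℕ) (f : ℝ → ℝ → Ω → ℝ) (h : ℕ → Ω → ℝ) {a b : ℕ} (hb : b ≤ n) (ω : Ω) :
    Jtwo n f h ((a : ℝ) / n) ((b : ℝ) / n) ω
      = ∑ k ∈ Finset.Ico a b, f ((a : ℝ) / n) ((k : ℝ) / n) ω * h k ω := by
  rcases Nat.eq_zero_or_pos n with rfl | hn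
  · obtain rfl : b = 0 := by omega
    simp [Jtwo]
  have hn' : (0 : ℝ) < n := by exact_mod_cast hn
  have he : eps n ((a : ℝ) / n) = (a : ℝ) / n := by
    unfold eps
    rw [mul_div_cancel₀ _ hn'.ne']
    simp
  unfold Jtwo
  rw [he, ← Finset.sum_filter]
  refine Finset.sum_congr ?_ fun _ _ => rfl
  ext k
  simp only [Finset.mem_filter, Finset.mem_range, Finset.mem_Ico,
    div_le_div_iff_of_pos_right hn', div_lt_div_iff_of_pos_right hn', Nat.cast_le, Nat.cast_lt]
  omega

/-- Change of base point in `r⁽⁰⁾`: the increment is a combination of the `xⁱ_{ut}` with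
coefficients `r⁽ⁱ⁾_{su}`. -/
lemma remainder_chen {Ω : Type*} {L : ℕ} {x : ℕ → ℝ → ℝ → Ω → ℝ} {y : ℕ → ℝ → Ω → ℝ} {s u t : ℝ} {ω : Ω}
    (h0 : ∀ s t, x 0 s t ω = 1)
    (hchen : ∀ k, 1 ≤ k → k ≤ L →
      x k s t ω = ∑ j ∈ Finset.range (k + 1), x (k - j) s u ω * x j u t ω) :
    remainder L x y 0 s t ω - remainder L x y 0 u t ω
      = ∑ i ∈ Finset.range (L + 1), remainder L x y i s u ω * x i u t ω := by
  have hchen' : ∀ k, k ≤ L →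
      x k s t ω = ∑ j ∈ Finset.range (k + 1), x (k - j) s u ω * x j u t ω := by
    intro k hk
    rcases Nat.eq_zero_or_pos k with rfl | hk0
    · simp [h0]
    · exact hchen k hk0 hk
  -- Including the index `j = 0`, where `x⁰ = 1`, absorbs the term `y⁽ᵏ⁾_s` into the sum.
  have hr : ∀ k (s t : ℝ), remainder L x y k s t ω
      = y k t ω - ∑ j ∈ Finset.range (L - k + 1), y (k + j) s ω * x j s t ω := by
    intro k s t
    unfold remainder
    rw [Finset.range_eq_Ico, Finset.sum_eq_sum_Ico_succ_bot (Nat.succ_pos _), h0,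
      show Finset.Ico (0 + 1) (L - k + 1) = Finset.Icc 1 (L - k) by ext; simp]
    simp only [add_zero, mul_one]
    ring
  have hdouble : ∑ k ∈ Finset.range (L + 1), y k s ω * x k s t ω
      = ∑ i ∈ Finset.range (L + 1),
          (∑ j ∈ Finset.range (L - i + 1), y (i + j) s ω * x j s u ω) * x i u t ω := by
    calc ∑ k ∈ Finset.range (L + 1), y k s ω * x k s t ω
        = ∑ k ∈ Finset.range (L + 1), ∑ i ∈ Finset.range (k + 1),
            y k s ω * (x (k - i) s u ω * x i u t ω) := by
          refine Finset.sum_congr rfl fun k hk => ?_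
          rw [hchen' k (by simpa [Nat.lt_succ_iff] using hk), Finset.mul_sum]
      _ = ∑ i ∈ Finset.range (L + 1), ∑ k ∈ Finset.Ico i (L + 1),
            y k s ω * (x (k - i) s u ω * x i u t ω) := by
          refine Finset.sum_comm' fun k i => ?_
          simp only [Finset.mem_range, Finset.mem_Ico]
          omega
      _ = _ := by
          refine Finset.sum_congr rfl fun i hi => ?_
          have hi' : i < L + 1 := Finset.mem_range.1 hi
          rw [Finset.sum_Ico_eq_sum_range, Finset.sum_mul, show L + 1 - i = L - i + 1 by omega]
          refine Finset.sum_congr rfl fun j _ => ?_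
          rw [Nat.add_sub_cancel_left]
          ring
  simp only [hr, sub_mul, Finset.sum_sub_distrib, ← hdouble, Nat.sub_zero, zero_add]
  ring

/-- Splitting the discrete integral of `r⁽⁰⁾` at an intermediate step `u`. -/
lemma sum_remainder_split {Ω : Type*} {L : ℕ} {x : ℕ → ℝ → ℝ → Ω → ℝ} {y : ℕ → ℝ → Ω → ℝ} {n : ℕ}
    {h : ℕ → Ω → ℝ} {a u b : ℕ} {ω : Ω} (hau : a ≤ u) (hub : u ≤ b) (hb : b ≤ n)
    (h0 : ∀ s t, x 0 s t ω = 1)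
    (hchen : ∀ k, 1 ≤ k → k ≤ L → ∀ s u t : ℝ, 0 ≤ s → s ≤ u → u ≤ t → t ≤ 1 →
      x k s t ω = ∑ j ∈ Finset.range (k + 1), x (k - j) s u ω * x j u t ω) :
    Jtwo n (remainder L x y 0) h ((a : ℝ) / n) ((b : ℝ) / n) ω
      = Jtwo n (remainder L x y 0) h ((a : ℝ) / n) ((u : ℝ) / n) ω
        + Jtwo n (remainder L x y 0) h ((u : ℝ) / n) ((b : ℝ) / n) ω
        + ∑ i ∈ Finset.range (L + 1), remainder L x y i ((a : ℝ) / n) ((u : ℝ) / n) ω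
            * Jtwo n (x i) h ((u : ℝ) / n) ((b : ℝ) / n) ω := by
  simp only [Jtwo_grid n _ h hb, Jtwo_grid n _ h (hub.trans hb), Finset.mul_sum]
  rw [Finset.sum_comm, ← Finset.sum_Ico_consecutive _ hau hub, add_assoc,
    ← Finset.sum_add_distrib]
  congr 1
  refine Finset.sum_congr rfl fun k hk => ?_
  obtain ⟨huk, hkb⟩ := Finset.mem_Ico.1 hk
  have key := remainder_chen (y := y) (s := (a : ℝ) / n) (u := (u : ℝ) / n) (t := (k : ℝ) / n) h0
    fun j hj1 hjL => hchen j hj1 hjL _ _ _ (by positivity) (by gcongr) (by gcongr)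
      (div_le_one_of_le₀ (by exact_mod_cast (hkb.le.trans hb)) (by positivity))
  simp only [← mul_assoc]
  rw [← Finset.sum_mul, ← key]
  ring

/-- Superadditivity of `u ↦ u ^ μ` with a gain, for two parts of comparable size. -/
lemma rpow_add_rpow_le {μ p q : ℝ} (hμ : 1 < μ) (hp : 0 < p) (hq : 0 < q)
    (hpq : p ≤ 2 * q) (hqp : q ≤ 2 * p) :
    p ^ μ + q ^ μ ≤ (2 / 3 : ℝ) ^ (μ - 1) * (p + q) ^ μ := by
  have split : ∀ z : ℝ, 0 < z → z ^ μ = z ^ (μ - 1) * z := fun z hz => by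
    rw [Real.rpow_sub_one hz.ne', div_mul_cancel₀ _ hz.ne']
  have bound : ∀ z : ℝ, 0 < z → z ≤ 2 / 3 * (p + q) →
      z ^ μ ≤ (2 / 3 : ℝ) ^ (μ - 1) * (p + q) ^ (μ - 1) * z := fun z hz hle => by
    rw [split z hz, ← Real.mul_rpow (by norm_num) (by positivity)]
    exact mul_le_mul_of_nonneg_right
      (Real.rpow_le_rpow hz.le hle (by linarith)) hz.le
  calc p ^ μ + q ^ μ
      ≤ (2 / 3 : ℝ) ^ (μ - 1) * (p + q) ^ (μ - 1) * p
        + (2 / 3 : ℝ) ^ (μ - 1) * (p + q) ^ (μ - 1) * q :=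
        add_le_add (bound p hp (by linarith)) (bound q hq (by linarith))
    _ = _ := by rw [split (p + q) (by positivity)]; ring

/-- Discrete sewing: a nonnegative function of pairs of partition points which vanishes on single
steps and is subadditive up to `A (t_b - t_a) ^ μ` with `μ > 1` is itself
of order `(t_b - t_a) ^ μ`, uniformly in the mesh. -/
lemma discrete_sewing {μ A : ℝ} (hμ : 1 < μ) (hA : 0 ≤ A) {n : ℕ} (F : ℕ → ℕ → ℝ≥0∞)
    (h_diag : ∀ a, a ≤ n → F a a = 0) (h_step : ∀ a, a + 1 ≤ n → F a (a + 1) = 0)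
    (h_split : ∀ a u b : ℕ, a ≤ u → u ≤ b → b ≤ n →
      F a b ≤ F a u + F u b + ENNReal.ofReal (A * ((b : ℝ) / n - (a : ℝ) / n) ^ μ))
    {a b : ℕ} (hab : a ≤ b) (hb : b ≤ n) :
    F a b ≤ ENNReal.ofReal
      (A / (1 - (2 / 3 : ℝ) ^ (μ - 1)) * ((b : ℝ) / n - (a : ℝ) / n) ^ μ) := by
  set q : ℝ := (2 / 3 : ℝ) ^ (μ - 1) with hq
  have hq1 : q < 1 := Real.rpow_lt_one (by norm_num) (by norm_num) (by linarith)
  set M : ℝ := A / (1 - q) with hM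
  have hM0 : 0 ≤ M := div_nonneg hA (by linarith)
  -- `M` is the fixed point of the recursion for the constant.
  have hMq : M * q + A = M := by
    have : M * (1 - q) = A := div_mul_cancel₀ _ (by linarith)
    linarith
  obtain ⟨N, hN⟩ : ∃ N, b - a = N := ⟨_, rfl⟩
  induction N using Nat.strong_induction_on generalizing a b with
  | _ N ih =>
    rcases Nat.lt_or_ge N 2 with hN2 | hN2
    · obtain rfl | rfl : b = a ∨ b = a + 1 := by omega
      · simp [h_diag _ hb]
      · simp [h_step _ hb]
    · have hn : (0 : ℝ) < n := by exact_mod_cast (show 0 < n by omega)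
      obtain ⟨u, hau, hub, h1, h2⟩ :
          ∃ u, a < u ∧ u < b ∧ u - a ≤ 2 * (b - u) ∧ b - u ≤ 2 * (u - a) :=
        ⟨a + N / 2, by omega, by omega, by omega, by omega⟩
      have hau' : (a : ℝ) < u := by exact_mod_cast hau
      have hub' : (u : ℝ) < b := by exact_mod_cast hub
      have h1' : (u : ℝ) - a ≤ 2 * (b - u) := by
        have : u + 2 * u ≤ 2 * b + a := by omega
        have : (u : ℝ) + 2 * u ≤ 2 * b + a := by exact_mod_cast this
        linarith
      have h2' : (b : ℝ) - u ≤ 2 * (u - a) := by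
        have : b + 2 * a ≤ 2 * u + u := by omega
        have : (b : ℝ) + 2 * a ≤ 2 * u + u := by exact_mod_cast this
        linarith
      have hpow := rpow_add_rpow_le (p := (u : ℝ) / n - a / n) (q := (b : ℝ) / n - u / n) hμ
        (by rw [← sub_div]; exact div_pos (by linarith) hn)
        (by rw [← sub_div]; exact div_pos (by linarith) hn)
        (by rw [← sub_div, ← sub_div, ← mul_div_assoc]; gcongr)
        (by rw [← sub_div, ← sub_div, ← mul_div_assoc]; gcongr)
      rw [show (u : ℝ) / n - a / n + ((b : ℝ) / n - u / n) = (b : ℝ) / n - a / n by ring,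
        ← hq] at hpow
      have hu0 : (0 : ℝ) ≤ (u : ℝ) / n - a / n := by
        rw [← sub_div]; exact div_nonneg (by linarith) hn.le
      have hb0 : (0 : ℝ) ≤ (b : ℝ) / n - u / n := by
        rw [← sub_div]; exact div_nonneg (by linarith) hn.le
      have hba0 : (0 : ℝ) ≤ (b : ℝ) / n - a / n := by linarith
      calc F a b ≤ F a u + F u b + ENNReal.ofReal (A * ((b : ℝ) / n - (a : ℝ) / n) ^ μ) :=
            h_split a u b hau.le hub.le hb
        _ ≤ ENNReal.ofReal (M * ((u : ℝ) / n - (a : ℝ) / n) ^ μ)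
            + ENNReal.ofReal (M * ((b : ℝ) / n - (u : ℝ) / n) ^ μ)
            + ENNReal.ofReal (A * ((b : ℝ) / n - (a : ℝ) / n) ^ μ) := by
            gcongr
            · exact ih (u - a) (by omega) hau.le (by omega) rfl
            · exact ih (b - u) (by omega) hub.le hb rfl
        _ = ENNReal.ofReal (M * ((u : ℝ) / n - (a : ℝ) / n) ^ μ
            + M * ((b : ℝ) / n - (u : ℝ) / n) ^ μ
            + A * ((b : ℝ) / n - (a : ℝ) / n) ^ μ) := by
            rw [ENNReal.ofReal_add (by positivity) (by positivity),
              ENNReal.ofReal_add (by positivity) (by positivity)]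
        _ ≤ _ := by
            apply ENNReal.ofReal_le_ofReal
            have := mul_le_mul_of_nonneg_left hpow hM0
            calc _ ≤ (M * q + A) * ((b : ℝ) / n - (a : ℝ) / n) ^ μ := by linarith
              _ = _ := by rw [hMq]

lemma measurable_Jtwo {n : ℕ} {f : ℝ → ℝ → Ω → ℝ} {h : ℕ → Ω → ℝ}
    (hf : ∀ s t, Measurable (f s t)) (hh : ∀ k, Measurable (h k)) (s t : ℝ) :
    Measurable (Jtwo n f h s t) := by
  unfold Jtwo
  refine Finset.measurable_sum _ fun k _ => ?_
  split_ifs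
  · exact (hf _ _).mul (hh k)
  · exact measurable_const

lemma eLpNorm_one_mul_le {P : Measure Ω} {f g : Ω → ℝ} (hf : Measurable f) (hg : Measurable g) :
    eLpNorm (fun ω => f ω * g ω) 1 P ≤ eLpNorm f 2 P * eLpNorm g 2 P := by
  have := eLpNorm_smul_le_mul_eLpNorm (p := 2) (q := 2) (r := 1) (μ := P)
    hg.aestronglyMeasurable hf.aestronglyMeasurable
  exact this

/-- **Estimate for discrete rough integrals** (Proposition 3.6): if the controlled
bounds hold and `‖J_s^t(x^i;h)‖_{L²} ≤ K (t-s)^{α+νi}` on partition points, then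
`‖J_s^t(r^{(0)};h)‖_{L¹} ≤ K' (t-s)^{νℓ+α}` on partition points, with `K'` depending
only on `K, K₀, C, ν, α, ℓ` (and not on `n`). -/
theorem discrete_rough_integral_estimate
    (ν α C K K₀ : ℝ) (hν : 0 < ν) (hν1 : ν < 1) (hα : 0 < α)
    (ℓ : ℕ) (hℓ1 : 1 < ν * ℓ + α) (hℓ2 : ∀ m : ℕ, m < ℓ → ν * m + α ≤ 1) :
    ∃ K' : ℝ,
      ∀ (Ω : Type) (_ : MeasurableSpace Ω) (P : Measure Ω), IsProbabilityMeasure P →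
      ∀ (n : ℕ) (X : ℝ → Ω → ℝ) (x : ℕ → ℝ → ℝ → Ω → ℝ) (y : ℕ → ℝ → Ω → ℝ)
        (h : ℕ → Ω → ℝ),
        IsRoughPath P 2 ν ℓ C X x →
        Controlled P ν ℓ K₀ x y →
        (∀ k, Measurable (h k)) →
        (∀ i, i ≤ ℓ - 1 → ∀ a b : ℕ, a ≤ b → b ≤ n →
          eLpNorm (Jtwo n (x i) h ((a : ℝ) / n) ((b : ℝ) / n)) 2 P
            ≤ ENNReal.ofReal (K * ((b : ℝ) / n - (a : ℝ) / n) ^ (α + ν * i))) →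
        ∀ a b : ℕ, a ≤ b → b ≤ n →
          eLpNorm (Jtwo n
              (fun s t ω => y 0 t ω - y 0 s ω -
                ∑ j ∈ Finset.Icc 1 (ℓ - 1), y j s ω * x j s t ω)
              h ((a : ℝ) / n) ((b : ℝ) / n)) 1 P
            ≤ ENNReal.ofReal (K' * ((b : ℝ) / n - (a : ℝ) / n) ^ (ν * ℓ + α)) := by
  set μ : ℝ := ν * ℓ + α with hμ
  set L : ℕ := ℓ - 1 with hL
  -- Negative constants are admitted by the hypotheses, so positive parts are used throughout.
  set A : ℝ := (L + 1) * (max K₀ 0 * max K 0) with hA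
  have hA0 : 0 ≤ A := by positivity
  refine ⟨A / (1 - (2 / 3 : ℝ) ^ (μ - 1)), ?_⟩
  intro Ω _ P _ n X x y h hx hy hh hJ a b hab hb
  obtain ⟨hxm, -, hx0, hx1, hchen, -⟩ := hx
  obtain ⟨hym, -, -, hrem⟩ := hy
  have hrm : ∀ k, k ≤ L → ∀ s t, Measurable (remainder L x y k s t) := fun k hk s t => by
    unfold remainder
    refine ((hym k hk t).sub (hym k hk s)).sub (Finset.measurable_sum _ fun j hj => ?_)
    have := Finset.mem_Icc.1 hj
    exact (hym (k + j) (by omega) s).mul (hxm j s t)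
  have hR : ∀ s t, Measurable (Jtwo n (remainder L x y 0) h s t) :=
    measurable_Jtwo (hrm 0 (Nat.zero_le _)) hh
  have hfun : (fun s t ω => y 0 t ω - y 0 s ω - ∑ j ∈ Finset.Icc 1 L, y j s ω * x j s t ω)
      = remainder L x y 0 := by
    funext s t ω
    simp only [remainder, zero_add, Nat.sub_zero]
  rw [hfun]
  refine discrete_sewing hℓ1 hA0
    (fun a b => eLpNorm (Jtwo n (remainder L x y 0) h ((a : ℝ) / n) ((b : ℝ) / n)) 1 P)
    ?_ ?_ ?_ hab hb
  · intro a ha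
    have : Jtwo n (remainder L x y 0) h ((a : ℝ) / n) ((a : ℝ) / n) = 0 := by
      ext ω
      rw [Jtwo_grid n _ h ha]
      simp
    simp only [this, eLpNorm_zero]
  · intro a ha
    have hJa : Jtwo n (remainder L x y 0) h ((a : ℝ) / n) (((a + 1 : ℕ) : ℝ) / n)
        = fun ω => remainder L x y 0 ((a : ℝ) / n) ((a : ℝ) / n) ω * h a ω := by
      ext ω
      rw [Jtwo_grid n _ h ha]
      simp
    have hr0 : eLpNorm (remainder L x y 0 ((a : ℝ) / n) ((a : ℝ) / n)) 2 P = 0 := by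
      rcases Nat.eq_zero_or_pos ℓ with h0 | hpos
      · -- For `ℓ = 0` the exponent in the remainder bound is `0`, but the remainder on the
        -- diagonal is `y_s - y_s`.
        have hL0 : L = 0 := by omega
        have : remainder L x y 0 ((a : ℝ) / n) ((a : ℝ) / n) = 0 := by
          ext ω
          simp [remainder, hL0]
        rw [this, eLpNorm_zero]
      · have := hrem 0 (Nat.zero_le _) ((a : ℝ) / n) ((a : ℝ) / n) (by positivity) le_rfl
          (div_le_one_of_le₀ (by exact_mod_cast (show a ≤ n by omega)) (by positivity))
        have hexp : ((ℓ - 0 : ℕ) : ℝ) * ν ≠ 0 :=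
          mul_ne_zero (by exact_mod_cast (show ℓ - 0 ≠ 0 by omega)) hν.ne'
        rw [sub_self, Real.zero_rpow hexp, mul_zero, ENNReal.ofReal_zero] at this
        exact le_antisymm this bot_le
    have hae := (eLpNorm_eq_zero_iff (hrm 0 (Nat.zero_le _) _ _).aestronglyMeasurable
      (by norm_num)).1 hr0
    simp only [hJa]
    refine (eLpNorm_eq_zero_iff
      ((hrm 0 (Nat.zero_le _) _ _).mul (hh a)).aestronglyMeasurable one_ne_zero).2 ?_
    filter_upwards [hae] with ω hω
    simp [hω]
  · intro a u b hau hub hb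
    have hsplit : Jtwo n (remainder L x y 0) h ((a : ℝ) / n) ((b : ℝ) / n)
        = Jtwo n (remainder L x y 0) h ((a : ℝ) / n) ((u : ℝ) / n)
          + Jtwo n (remainder L x y 0) h ((u : ℝ) / n) ((b : ℝ) / n)
          + ∑ i ∈ Finset.range (L + 1), fun ω =>
              remainder L x y i ((a : ℝ) / n) ((u : ℝ) / n) ω
                * Jtwo n (x i) h ((u : ℝ) / n) ((b : ℝ) / n) ω := by
      ext ω
      rw [Pi.add_apply, Pi.add_apply, Finset.sum_apply]
      exact sum_remainder_split hau hub hb (fun s t => hx0 s t ω)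
        fun k hk1 hkL s u t hs hsu hut ht => hchen k hk1 hkL s u t hs hsu hut ht ω
    have hprodm : ∀ i ∈ Finset.range (L + 1), Measurable fun ω =>
        remainder L x y i ((a : ℝ) / n) ((u : ℝ) / n) ω
          * Jtwo n (x i) h ((u : ℝ) / n) ((b : ℝ) / n) ω := fun i hi =>
      (hrm i (by have := Finset.mem_range.1 hi; omega) _ _).mul (measurable_Jtwo (hxm i) hh _ _)
    have hua0 : (0 : ℝ) ≤ (u : ℝ) / n - a / n := sub_nonneg.2 (by gcongr)
    have hbu0 : (0 : ℝ) ≤ (b : ℝ) / n - u / n := sub_nonneg.2 (by gcongr)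
    have hterm : ∀ i ∈ Finset.range (L + 1), eLpNorm (fun ω =>
        remainder L x y i ((a : ℝ) / n) ((u : ℝ) / n) ω
          * Jtwo n (x i) h ((u : ℝ) / n) ((b : ℝ) / n) ω) 1 P
        ≤ ENNReal.ofReal (max K₀ 0 * max K 0 * ((b : ℝ) / n - (a : ℝ) / n) ^ μ) := by
      intro i hi
      have hiL : i ≤ L := by have := Finset.mem_range.1 hi; omega
      -- Also valid for `ℓ = 0`, where `i = 0`.
      have hcast : ((ℓ - i : ℕ) : ℝ) = (ℓ : ℝ) - i := Nat.cast_sub (by omega)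
      have hli : (0 : ℝ) ≤ ((ℓ - i : ℕ) : ℝ) * ν := by positivity
      have hαi : (0 : ℝ) ≤ α + ν * i := by positivity
      have h1 := hrem i hiL ((a : ℝ) / n) ((u : ℝ) / n) (by positivity) (by gcongr)
        (div_le_one_of_le₀ (by exact_mod_cast (hub.trans hb)) (by positivity))
      have h2 := hJ i hiL u b hub hb
      refine (eLpNorm_one_mul_le (hrm i hiL _ _) (measurable_Jtwo (hxm i) hh _ _)).trans
        ((mul_le_mul' h1 h2).trans ?_)
      calc _ ≤ ENNReal.ofReal (max K₀ 0 * ((b : ℝ) / n - (a : ℝ) / n) ^ (((ℓ - i : ℕ) : ℝ) * ν))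
            * ENNReal.ofReal (max K 0 * ((b : ℝ) / n - (a : ℝ) / n) ^ (α + ν * i)) := by
            gcongr ENNReal.ofReal ?_ * ENNReal.ofReal ?_
            · exact mul_le_mul (le_max_left _ _)
                (Real.rpow_le_rpow hua0 (by linarith) hli) (by positivity) (le_max_right _ _)
            · exact mul_le_mul (le_max_left _ _)
                (Real.rpow_le_rpow hbu0 (by linarith) hαi) (by positivity) (le_max_right _ _)
        _ = _ := by
            have hba0 : (0 : ℝ) ≤ (b : ℝ) / n - a / n := by linarith
            rw [← ENNReal.ofReal_mul (by positivity),
              show μ = ((ℓ - i : ℕ) : ℝ) * ν + (α + ν * i) by rw [hcast, hμ]; ring,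
              Real.rpow_add_of_nonneg hba0 hli hαi]
            congr 1
            ring
    have hsumm : AEStronglyMeasurable (∑ i ∈ Finset.range (L + 1), fun ω =>
        remainder L x y i ((a : ℝ) / n) ((u : ℝ) / n) ω
          * Jtwo n (x i) h ((u : ℝ) / n) ((b : ℝ) / n) ω) P :=
      Finset.aestronglyMeasurable_sum _ fun i hi => (hprodm i hi).aestronglyMeasurable
    rw [hsplit]
    refine (eLpNorm_add_le ((hR _ _).add (hR _ _)).aestronglyMeasurable hsumm le_rfl).trans ?_
    refine add_le_add (eLpNorm_add_le (hR _ _).aestronglyMeasurable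
      (hR _ _).aestronglyMeasurable le_rfl) ?_
    refine (eLpNorm_sum_le (fun i hi => (hprodm i hi).aestronglyMeasurable) le_rfl).trans ?_
    refine (Finset.sum_le_sum hterm).trans (le_of_eq ?_)
    rw [Finset.sum_const, Finset.card_range, nsmul_eq_mul, hA, mul_assoc (L + 1 : ℝ),
      ENNReal.ofReal_mul (p := (L + 1 : ℝ)) (by positivity), ← Nat.cast_succ,
      ENNReal.ofReal_natCast]

end
end

section
/- Let x be a fractional Brownian motion with Hurst parameter ν ∈ (0,1/2] and let ℓ be the integer determined by ℓ−1 ≤ 1/(2ν) < ℓ. Fix i ∈ {1,…,ℓ−1} and integers q,q′ ≥ ℓ. For n ≥ m ≥ 1 and any partition 0 ≤ s_0 < ⋯ < s_m ≤ 1 with s_{j+1} − s_j ≤ 1/m, set ζ^{i,q}_j = J_{s_j}^{s_{j+1}}(x^i; h^{n,q}) and ϑ(q,q′,i) = E[(Σ_{j=0}^{m−1} ζ^{i,q}_j)(Σ_{j′=0}^{m−1} ζ^{i,q′}_{j′})]. Then: (i) if |q−q′| ≤ 2i, there is a constant K depending only on ν and ℓ such that ϑ(q,q′,i) ≤ K (n^{1−2ν}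 + n·m^{−2iν} + n^{1−ν}) · Σ_r r!·C(q,r)·C(q′,r), the sum ranging over integers r with (q+q′)/2 − i ≤ r ≤ min(q,q′) and C(q,r) denoting the binomial coefficient; (ii) if |q−q′| > 2i, then ϑ(q,q′,i) = 0. -/
/-!
The expectation is a double sum, over pairs of grid points `k/n` and `l/n`, of mixed moments
`E[H_q(X) A^i H_{q'}(Y) B^i]` divided by `i!²`. Here `X`, `Y` are the increments of the fBm over the
cells starting at `k/n`, `l/n`, rescaled to unit variance, and `A`, `B` are increments from the
first grid points of the two blocks up to `k/n`, `l/n`. A grid point lies in at most one block of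
the coarse partition, so each `k` contributes one such product or nothing (`cell_cases`).

The moments are bounded through the diagram formula. `X` is independent of what remains of
`Y, A, B` once their regressions on `X` are subtracted, so the one-dimensional Stein identity gives
`JointGauss.stein`: one leg of `H_{q+1}(X)` is contracted with `Y`, with `A` or with `B`. Iterating,
if `r` legs of `H_q(X)` meet legs of `H_{q'}(Y)`, the other `d = q + q' - 2r` legs must meet some of
the `2i` factors `A`, `B`, which forces `d ≤ 2i`, that is `r ≥ (q+q')/2 - i`; there are
`r! C(q,r) C(q',r)` pairings of the first kind (`JointGauss.hermite_bound`, with the bound `diag`).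
As `q, q' ≥ ℓ > i`, this forces `r ≥ 1`, so the term carries at least one factor `|ρ(k-l)|`.

The sizes of the factors come from subadditivity of `t ↦ t^{2ν}` for `2ν ≤ 1`: contractions of `X`
or `Y` with `A` or `B` are at most `n^{-ν}`, and `A`, `B` have standard deviation at most `m^{-ν}`.
Hence each pair contributes at most a constant times `|ρ(k-l)| (m^{-2iν} + n^{-ν})` times the
combinatorial sum (`diag_le`). By concavity of `t ↦ t^{2ν}` the correlations `ρ(k)`, `k ≠ 0`, are
nonpositive and telescope, so `∑_l |ρ(k-l)| ≤ 2` (`sum_abs_rho`); summing over `k` gives (i), even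
for the absolute value. In (ii) no `r ≤ min(q,q')` is admissible, so the same bound is `0`.
-/

open MeasureTheory ProbabilityTheory Filter
open scoped ENNReal NNReal

noncomputable section

variable {Ω : Type*} [MeasurableSpace Ω]

/-! ### Finite moments and the Gaussian Stein identity -/

/-- `f` has finite moments of all orders. -/
def AllLp (P : Measure Ω) (f : Ω → ℝ) : Prop := ∀ p : ℕ, MemLp f p P

namespace AllLp

variable {P : Measure Ω} {f g : Ω → ℝ}

lemma mul (hf : AllLp P f) (hg : AllLp P g) : AllLp P (fun ω => f ω * g ω) := by
  intro p
  have h1 := hf (2 * p)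
  have h2 := hg (2 * p)
  have : ENNReal.HolderTriple ((2 * p : ℕ) : ℝ≥0∞) ((2 * p : ℕ) : ℝ≥0∞) (p : ℝ≥0∞) := by
    constructor
    push_cast
    rw [ENNReal.mul_inv (by simp) (by simp), ← add_mul, ENNReal.inv_two_add_inv_two, one_mul]
  exact h2.mul h1

lemma add (hf : AllLp P f) (hg : AllLp P g) : AllLp P (fun ω => f ω + g ω) :=
  fun p => (hf p).add (hg p)

lemma sub (hf : AllLp P f) (hg : AllLp P g) : AllLp P (fun ω => f ω - g ω) :=
  fun p => (hf p).sub (hg p)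

lemma const [IsFiniteMeasure P] (c : ℝ) : AllLp P (fun _ => c) := fun _ => memLp_const c

lemma pow [IsFiniteMeasure P] (hf : AllLp P f) (k : ℕ) : AllLp P (fun ω => f ω ^ k) := by
  induction k with
  | zero => simpa using const 1
  | succ k ih => simpa only [pow_succ] using ih.mul hf

lemma poly [IsFiniteMeasure P] (hf : AllLp P f) (p : Polynomial ℝ) :
    AllLp P (fun ω => p.eval (f ω)) := by
  induction p using Polynomial.induction_on' with
  | add p q hp hq => simpa using hp.add hq
  | monomial k a => simpa using (const a).mul (hf.pow k)

lemma integrable (hf : AllLp P f) : Integrable f P := by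
  have := hf 1
  rw [Nat.cast_one] at this
  exact memLp_one_iff_integrable.mp this

lemma of_gaussian {v : ℝ≥0} (hf : Measurable f) (h : P.map f = gaussianReal 0 v) :
    AllLp P f := by
  intro p
  have h2 : MemLp id (p : ℝ≥0∞) (P.map f) := by
    rw [h]; exact memLp_id_gaussianReal' _ (by simp)
  exact (memLp_map_measure_iff aestronglyMeasurable_id hf.aemeasurable).1 h2

end AllLp

lemma Hq_eq_eval (q : ℕ) (t : ℝ) :
    Hq q t = ((Polynomial.hermite q).map (Int.castRingHom ℝ)).eval t := by
  rw [Hq, Polynomial.aeval_def, Polynomial.eval_map]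
  rfl

lemma Hq_zero (t : ℝ) : Hq 0 t = 1 := by simp [Hq]

lemma Hq_measurable (q : ℕ) : Measurable (Hq q) := by
  have : Hq q = fun t => ((Polynomial.hermite q).map (Int.castRingHom ℝ)).eval t :=
    funext (Hq_eq_eval q)
  rw [this]
  exact (Polynomial.continuous _).measurable

lemma AllLp.hermite {P : Measure Ω} [IsFiniteMeasure P] {f : Ω → ℝ} (hf : AllLp P f) (q : ℕ) :
    AllLp P (fun ω => Hq q (f ω)) := by
  simpa only [Hq_eq_eval] using hf.poly _

lemma hermite_deriv (q : ℕ) :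
    Polynomial.derivative (Polynomial.hermite (q + 1)) =
      ((q + 1 : ℕ) : Polynomial ℤ) * Polynomial.hermite q := by
  induction q with
  | zero => simp
  | succ q ih =>
    rw [Polynomial.hermite_succ (q + 1)]
    rw [Polynomial.derivative_sub, Polynomial.derivative_mul, Polynomial.derivative_X, ih,
      Polynomial.derivative_mul, Polynomial.derivative_natCast, Polynomial.hermite_succ q]
    push_cast
    ring

lemma Hq_hasDerivAt (q : ℕ) (t : ℝ) : HasDerivAt (Hq q) (q * Hq (q - 1) t) t := by
  have h : Hq q = fun t => ((Polynomial.hermite q).map (Int.castRingHom ℝ)).eval t :=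
    funext (Hq_eq_eval q)
  rw [h, Hq_eq_eval]
  refine (Polynomial.hasDerivAt _ t).congr_deriv ?_
  symm
  cases q with
  | zero => simp
  | succ q =>
    rw [Polynomial.derivative_map, hermite_deriv]
    simp

lemma Hq_succ (q : ℕ) (t : ℝ) : Hq (q + 1) t = t * Hq q t - q * Hq (q - 1) t := by
  have h := Polynomial.hasDerivAt ((Polynomial.hermite q).map (Int.castRingHom ℝ)) t
  have h2 := (Hq_hasDerivAt q t)
  have e : Hq q = fun t => ((Polynomial.hermite q).map (Int.castRingHom ℝ)).eval t :=
    funext (Hq_eq_eval q)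
  rw [e] at h2
  rw [h2.unique h, Hq_eq_eval, Hq_eq_eval, Polynomial.hermite_succ, Polynomial.derivative_map]
  simp

/-- The standard normal density satisfies `φ' = -t φ`. -/
lemma gaussianPDF_hasDerivAt (t : ℝ) :
    HasDerivAt (gaussianPDFReal 0 1) (-t * gaussianPDFReal 0 1 t) t := by
  have : gaussianPDFReal 0 1 =
      fun x => (√(2 * Real.pi))⁻¹ * Real.exp (-(x ^ 2) / 2) := by
    ext x; simp [gaussianPDFReal]
  rw [this]
  have h : HasDerivAt (fun x : ℝ => -(x ^ 2) / 2) (-t) t := by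
    refine ((hasDerivAt_pow 2 t).neg.div_const 2).congr_deriv ?_
    simp only [Nat.cast_ofNat, Nat.add_one_sub_one, pow_one]
    ring
  refine (h.exp.const_mul ((√(2 * Real.pi))⁻¹)).congr_deriv ?_
  ring

lemma integrable_poly_pdf (p : Polynomial ℝ) :
    Integrable (fun t => gaussianPDFReal 0 1 t * p.eval t) := by
  have h : AllLp (gaussianReal 0 1) (fun t : ℝ => t) :=
    AllLp.of_gaussian (v := 1) measurable_id (by simp)
  have h2 := (h.poly p).integrable
  rw [gaussianReal_of_var_ne_zero 0 one_ne_zero] at h2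
  have h3 := (integrable_withDensity_iff_integrable_smul' (measurable_gaussianPDF 0 1)
    (ae_of_all _ fun _ => gaussianPDF_lt_top)).1 h2
  simpa [toReal_gaussianPDF] using h3

/-- One-dimensional Stein identity: `H_{q+1}` is the adjoint derivative of `H_q`. -/
lemma stein_one (q : ℕ) (p : Polynomial ℝ) :
    ∫ t, Hq (q + 1) t * p.eval t ∂(gaussianReal 0 1) =
      ∫ t, Hq q t * p.derivative.eval t ∂(gaussianReal 0 1) := by
  rw [integral_gaussianReal_eq_integral_smul one_ne_zero,
    integral_gaussianReal_eq_integral_smul one_ne_zero]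
  simp only [smul_eq_mul]
  have hd : ∀ t, HasDerivAt (fun t => gaussianPDFReal 0 1 t * Hq q t)
      (-(gaussianPDFReal 0 1 t * Hq (q + 1) t)) t := by
    intro t
    refine ((gaussianPDF_hasDerivAt t).mul (Hq_hasDerivAt q t)).congr_deriv ?_
    rw [Hq_succ]; ring
  have hp : ∀ t, HasDerivAt (fun t => p.eval t) (p.derivative.eval t) t :=
    fun t => p.hasDerivAt t
  have key := integral_mul_deriv_eq_deriv_mul_of_integrable
    (u := fun t => gaussianPDFReal 0 1 t * Hq q t) (v := fun t => p.eval t)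
    (fun t _ => hd t) (fun t _ => hp t) ?_ ?_ ?_
  · simp only [mul_assoc] at key
    rw [key, ← integral_neg]
    congr 1; ext t; ring
  · convert integrable_poly_pdf (((Polynomial.hermite q).map (Int.castRingHom ℝ)) *
      p.derivative) using 1
    ext t; simp [Hq_eq_eval, mul_assoc]
  · convert (integrable_poly_pdf (((Polynomial.hermite (q + 1)).map (Int.castRingHom ℝ)) *
      p)).neg using 1
    ext t; simp [Hq_eq_eval, mul_assoc]
  · convert integrable_poly_pdf (((Polynomial.hermite q).map (Int.castRingHom ℝ)) *
      p) using 1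
    ext t; simp [Hq_eq_eval, mul_assoc]

/-! ### Contractions in jointly Gaussian vectors -/

/-- `X, Y, A, B` are jointly Gaussian and centered: every linear combination of them is a
centered (possibly degenerate) Gaussian variable. -/
structure JointGauss (P : Measure Ω) (X Y A B : Ω → ℝ) : Prop where
  mX : Measurable X
  mY : Measurable Y
  mA : Measurable A
  mB : Measurable B
  law : ∀ c₀ c₁ c₂ c₃ : ℝ, ∃ v : ℝ≥0,
    P.map (fun ω => c₀ * X ω + c₁ * Y ω + c₂ * A ω + c₃ * B ω) = gaussianReal 0 v

namespace JointGauss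

variable {P : Measure Ω} {X Y A B : Ω → ℝ}

lemma swap (h : JointGauss P X Y A B) : JointGauss P Y X A B := by
  refine ⟨h.mY, h.mX, h.mA, h.mB, fun c₀ c₁ c₂ c₃ => ?_⟩
  obtain ⟨v, hv⟩ := h.law c₁ c₀ c₂ c₃
  refine ⟨v, ?_⟩
  rw [← hv]
  congr 1; ext ω; ring

lemma allLpX (h : JointGauss P X Y A B) : AllLp P X := by
  obtain ⟨v, hv⟩ := h.law 1 0 0 0
  exact .of_gaussian h.mX (by simpa using hv)

lemma allLpY (h : JointGauss P X Y A B) : AllLp P Y := h.swap.allLpX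

lemma allLpA (h : JointGauss P X Y A B) : AllLp P A := by
  obtain ⟨v, hv⟩ := h.law 0 0 1 0
  exact .of_gaussian h.mA (by simpa using hv)

lemma allLpB (h : JointGauss P X Y A B) : AllLp P B := by
  obtain ⟨v, hv⟩ := h.law 0 0 0 1
  exact .of_gaussian h.mB (by simpa using hv)

/-- Removing from `Y, A, B` their regressions on a standard `X` leaves a vector
independent of `X`. -/
lemma indep [IsProbabilityMeasure P] (h : JointGauss P X Y A B)
    (hX : P.map X = gaussianReal 0 1) :
    IndepFun X (fun ω => (Y ω - (∫ ω, X ω * Y ω ∂P) * X ω, A ω - (∫ ω, X ω * A ω ∂P) * X ω,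
      B ω - (∫ ω, X ω * B ω ∂P) * X ω)) P := by
  set ρ := ∫ ω, X ω * Y ω ∂P with hρ
  set α := ∫ ω, X ω * A ω ∂P with hα
  set β := ∫ ω, X ω * B ω ∂P with hβ
  have mX := h.mX
  have mY := h.mY
  have mA := h.mA
  have mB := h.mB
  have mF : Measurable (fun ω => (X ω, (Y ω - ρ * X ω, A ω - α * X ω, B ω - β * X ω))) := by
    fun_prop
  have hG : HasGaussianLaw
      (fun ω => (X ω, (Y ω - ρ * X ω, A ω - α * X ω, B ω - β * X ω))) P := by
    -- Cramér–Wold: a linear functional of this vector is a combination of `X, Y, A, B`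
    refine ⟨isGaussian_of_map_eq_gaussianReal fun L => ?_⟩
    obtain ⟨v, hv⟩ := h.law
      (L (1, 0) - ρ * L (0, 1, 0, 0) - α * L (0, 0, 1, 0) - β * L (0, 0, 0, 1))
      (L (0, 1, 0, 0)) (L (0, 0, 1, 0)) (L (0, 0, 0, 1))
    refine ⟨0, v, ?_⟩
    rw [← hv, Measure.map_map L.continuous.measurable mF]
    congr 1
    ext ω
    have e : ((X ω, (Y ω - ρ * X ω, A ω - α * X ω, B ω - β * X ω)) : ℝ × ℝ × ℝ × ℝ) =
        X ω • (1, 0) + (Y ω - ρ * X ω) • (0, 1, 0, 0) + (A ω - α * X ω) • (0, 0, 1, 0)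
          + (B ω - β * X ω) • (0, 0, 0, 1) := by
      ext <;> simp
    simp only [Function.comp_apply]
    rw [e]
    simp only [map_add, map_smul, smul_eq_mul]
    ring
  have hX2 : ∫ ω, X ω * X ω ∂P = 1 := by
    have := variance_fun_id_gaussianReal (μ := 0) (v := 1)
    rw [variance_eq_integral measurable_id'.aemeasurable, ← hX,
      integral_map mX.aemeasurable (by fun_prop)] at this
    rw [integral_map mX.aemeasurable (by fun_prop)] at this
    have e0 : ∫ ω, X ω ∂P = 0 := by
      have := integral_id_gaussianReal (μ := 0) (v := 1)
      rwa [← hX, integral_map mX.aemeasurable (by fun_prop)] at this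
    simpa [e0, sq] using this
  have hX1 : ∫ ω, X ω ∂P = 0 := by
    have := integral_id_gaussianReal (μ := 0) (v := 1)
    rwa [← hX, integral_map mX.aemeasurable (by fun_prop)] at this
  have hcov : ∀ (Z : Ω → ℝ), AllLp P Z →
      cov[X, fun ω => Z ω - (∫ ω, X ω * Z ω ∂P) * X ω; P] = 0 := by
    intro Z hZ
    have hp := hZ.sub ((AllLp.const (P := P) (∫ ω, X ω * Z ω ∂P)).mul h.allLpX)
    rw [covariance_eq_sub (by simpa using h.allLpX 2) (by simpa using hp 2), hX1, zero_mul,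
      sub_zero]
    have : (X * fun ω => Z ω - (∫ ω, X ω * Z ω ∂P) * X ω) =
        fun ω => X ω * Z ω - (∫ ω, X ω * Z ω ∂P) * (X ω * X ω) := by
      ext ω; simp only [Pi.mul_apply]; ring
    rw [this, integral_sub (h.allLpX.mul hZ).integrable
      ((h.allLpX.mul h.allLpX).integrable.const_mul _), integral_const_mul, hX2]
    ring
  refine hG.indepFun_of_covariance_strongDual fun L₁ L₂ => ?_
  have e1 : (L₁ ∘ X) = fun ω => L₁ 1 * X ω := by
    ext ω
    have : X ω = X ω • (1 : ℝ) := by simp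
    simp only [Function.comp_apply]
    rw [this, map_smul]; simp [mul_comm]
  have e2 : (L₂ ∘ fun ω => (Y ω - ρ * X ω, A ω - α * X ω, B ω - β * X ω)) =
      fun ω => L₂ (1, 0, 0) * (Y ω - ρ * X ω) + (L₂ (0, 1, 0) * (A ω - α * X ω)
        + L₂ (0, 0, 1) * (B ω - β * X ω)) := by
    ext ω
    have : ((Y ω - ρ * X ω, A ω - α * X ω, B ω - β * X ω) : ℝ × ℝ × ℝ) =
        (Y ω - ρ * X ω) • (1, 0, 0) + ((A ω - α * X ω) • (0, 1, 0)
          + (B ω - β * X ω) • (0, 0, 1)) := by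
      ext <;> simp
    simp only [Function.comp_apply]
    rw [this]
    simp only [map_add, map_smul, smul_eq_mul]
    ring
  have lX := h.allLpX
  have lY : AllLp P (fun ω => L₂ (1, 0, 0) * (Y ω - ρ * X ω)) :=
    (AllLp.const _).mul (h.allLpY.sub ((AllLp.const _).mul lX))
  have lA : AllLp P (fun ω => L₂ (0, 1, 0) * (A ω - α * X ω)) :=
    (AllLp.const _).mul (h.allLpA.sub ((AllLp.const _).mul lX))
  have lB : AllLp P (fun ω => L₂ (0, 0, 1) * (B ω - β * X ω)) :=
    (AllLp.const _).mul (h.allLpB.sub ((AllLp.const _).mul lX))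
  have cadd : ∀ f g : Ω → ℝ, AllLp P f → AllLp P g →
      cov[X, fun ω => f ω + g ω; P] = cov[X, f; P] + cov[X, g; P] := fun f g hf hg =>
    covariance_add_right (by simpa using lX 2) (by simpa using hf 2) (by simpa using hg 2)
  rw [e1, e2, covariance_const_mul_left, cadd _ _ lY (lA.add lB), cadd _ _ lA lB,
    covariance_const_mul_right, covariance_const_mul_right, covariance_const_mul_right,
    hcov Y h.allLpY, hcov A h.allLpA, hcov B h.allLpB]
  simp

/-- Wick contraction of one leg of `H_{q+1}(X)`, for a standard `X`, against the remaining
variables. Conditionally on the residuals of `Y, A, B` after regression on `X`, which are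
independent of `X`, the other factors are a polynomial in `X`, to which `stein_one` applies.
The truncated exponents `q' - 1`, `a - 1`, `b - 1` are harmless: at `0` the prefactor vanishes. -/
lemma stein [IsProbabilityMeasure P] (h : JointGauss P X Y A B)
    (hX : P.map X = gaussianReal 0 1) (q q' a b : ℕ) :
    ∫ ω, Hq (q + 1) (X ω) * (Hq q' (Y ω) * (A ω ^ a * B ω ^ b)) ∂P =
      q' * (∫ ω, X ω * Y ω ∂P) *
          ∫ ω, Hq q (X ω) * (Hq (q' - 1) (Y ω) * (A ω ^ a * B ω ^ b)) ∂P
      + a * (∫ ω, X ω * A ω ∂P) *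
          ∫ ω, Hq q (X ω) * (Hq q' (Y ω) * (A ω ^ (a - 1) * B ω ^ b)) ∂P
      + b * (∫ ω, X ω * B ω ∂P) *
          ∫ ω, Hq q (X ω) * (Hq q' (Y ω) * (A ω ^ a * B ω ^ (b - 1))) ∂P := by
  have hind := h.indep hX
  set ρ := ∫ ω, X ω * Y ω ∂P with hρ
  set α := ∫ ω, X ω * A ω ∂P with hα
  set β := ∫ ω, X ω * B ω ∂P with hβ
  have mX := h.mX
  have mY := h.mY
  have mA := h.mA
  have mB := h.mB
  set U : Ω → ℝ × ℝ × ℝ := fun ω => (Y ω - ρ * X ω, A ω - α * X ω, B ω - β * X ω) with hU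
  have mU : Measurable U := by fun_prop
  -- Fubini on the product law of `(X, U)`
  have trans : ∀ f : ℝ × (ℝ × ℝ × ℝ) → ℝ, Measurable f →
      Integrable (fun ω => f (X ω, U ω)) P →
      ∫ ω, f (X ω, U ω) ∂P = ∫ u, ∫ x, f (x, u) ∂(gaussianReal 0 1) ∂(P.map U) := by
    intro f mf hf
    have hm := (indepFun_iff_map_prod_eq_prod_map_map mX.aemeasurable mU.aemeasurable).1 hind
    have mXU : AEMeasurable (fun ω => (X ω, U ω)) P := (mX.prodMk mU).aemeasurable
    have : IsProbabilityMeasure (P.map U) := Measure.isProbabilityMeasure_map mU.aemeasurable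
    have hint : Integrable f ((gaussianReal 0 1).prod (P.map U)) := by
      rw [← hX, ← hm]
      exact (integrable_map_measure mf.aestronglyMeasurable mXU).2 hf
    rw [← integral_map mXU mf.aestronglyMeasurable, hm, hX, integral_prod_symm _ hint]
  have lX := h.allLpX
  have lY := h.allLpY
  have lA := h.allLpA
  have lB := h.allLpB
  have mH : ∀ q, Measurable (Hq q) := Hq_measurable
  have intg : ∀ q q' a b, Integrable
      (fun ω => Hq q (X ω) * (Hq q' (Y ω) * (A ω ^ a * B ω ^ b))) P := fun q q' a b =>
    ((lX.hermite q).mul ((lY.hermite q').mul ((lA.pow a).mul (lB.pow b)))).integrable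
  -- the polynomial `x ↦ H_{q'}(ρx+u₁)(αx+u₂)^a(βx+u₃)^b`
  let pol : ℝ × ℝ × ℝ → Polynomial ℝ := fun u =>
    (((Polynomial.hermite q').map (Int.castRingHom ℝ)).comp
      (Polynomial.C ρ * Polynomial.X + Polynomial.C u.1)) *
    ((Polynomial.C α * Polynomial.X + Polynomial.C u.2.1) ^ a *
      (Polynomial.C β * Polynomial.X + Polynomial.C u.2.2) ^ b)
  have hpol : ∀ u x, (pol u).eval x =
      Hq q' (ρ * x + u.1) * ((α * x + u.2.1) ^ a * (β * x + u.2.2) ^ b) := by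
    intro u x
    simp [pol, Hq_eq_eval, Polynomial.eval_comp]
  have hdpol : ∀ u x, (pol u).derivative.eval x =
      q' * ρ * (Hq (q' - 1) (ρ * x + u.1) * ((α * x + u.2.1) ^ a * (β * x + u.2.2) ^ b))
      + a * α * (Hq q' (ρ * x + u.1) * ((α * x + u.2.1) ^ (a - 1) * (β * x + u.2.2) ^ b))
      + b * β * (Hq q' (ρ * x + u.1) * ((α * x + u.2.1) ^ a * (β * x + u.2.2) ^ (b - 1))) := by
    intro u x
    have l : ∀ c d : ℝ, HasDerivAt (fun x => c * x + d) c x := fun c d => by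
      simpa using ((hasDerivAt_id x).const_mul c).add_const d
    have h1 := ((Hq_hasDerivAt q' (ρ * x + u.1)).comp x (l ρ u.1)).mul
      (((l α u.2.1).pow a).mul ((l β u.2.2).pow b))
    have h2 := (pol u).hasDerivAt x
    have e : (fun x => (pol u).eval x) = fun x =>
      Hq q' (ρ * x + u.1) * ((α * x + u.2.1) ^ a * (β * x + u.2.2) ^ b) := funext (hpol u)
    rw [e] at h2
    refine (h2.unique h1).trans ?_
    simp only [Function.comp_apply, Pi.mul_apply, Pi.pow_apply]
    ring
  have hY' : ∀ ω, Y ω = ρ * X ω + (U ω).1 := fun ω => by simp [hU]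
  have hA' : ∀ ω, A ω = α * X ω + (U ω).2.1 := fun ω => by simp [hU]
  have hB' : ∀ ω, B ω = β * X ω + (U ω).2.2 := fun ω => by simp [hU]
  have eL : ∀ ω, Hq (q + 1) (X ω) * (Hq q' (Y ω) * (A ω ^ a * B ω ^ b)) =
      Hq (q + 1) (X ω) * (Hq q' (ρ * X ω + (U ω).1) *
        ((α * X ω + (U ω).2.1) ^ a * (β * X ω + (U ω).2.2) ^ b)) := fun ω => by
    rw [← hY', ← hA', ← hB']
  have eR : ∀ ω, Hq q (X ω) * (pol (U ω)).derivative.eval (X ω) =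
      q' * ρ * (Hq q (X ω) * (Hq (q' - 1) (Y ω) * (A ω ^ a * B ω ^ b)))
      + a * α * (Hq q (X ω) * (Hq q' (Y ω) * (A ω ^ (a - 1) * B ω ^ b)))
      + b * β * (Hq q (X ω) * (Hq q' (Y ω) * (A ω ^ a * B ω ^ (b - 1)))) := fun ω => by
    rw [hdpol, ← hY', ← hA', ← hB']; ring
  have i1 := (intg q (q' - 1) a b).const_mul (q' * ρ)
  have i2 := (intg q q' (a - 1) b).const_mul (a * α)
  have i3 := (intg q q' a (b - 1)).const_mul (b * β)
  have i12 : Integrable (fun ω =>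
      q' * ρ * (Hq q (X ω) * (Hq (q' - 1) (Y ω) * (A ω ^ a * B ω ^ b)))
      + a * α * (Hq q (X ω) * (Hq q' (Y ω) * (A ω ^ (a - 1) * B ω ^ b)))) P := i1.add i2
  have tL := trans (fun z => Hq (q + 1) z.1 * (Hq q' (ρ * z.1 + z.2.1) *
        ((α * z.1 + z.2.2.1) ^ a * (β * z.1 + z.2.2.2) ^ b))) (by fun_prop)
    ((intg (q + 1) q' a b).congr (ae_of_all _ eL))
  have tR := trans (fun z => Hq q z.1 * (pol z.2).derivative.eval z.1)
    (by simp only [hdpol]; fun_prop)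
    ((i12.add i3).congr (ae_of_all _ fun ω => (eR ω).symm))
  calc _ = ∫ ω, Hq (q + 1) (X ω) * (Hq q' (ρ * X ω + (U ω).1) *
        ((α * X ω + (U ω).2.1) ^ a * (β * X ω + (U ω).2.2) ^ b)) ∂P :=
        integral_congr_ae (ae_of_all _ eL)
    _ = ∫ ω, Hq q (X ω) * (pol (U ω)).derivative.eval (X ω) ∂P := by
        rw [tL, tR]
        congr 1
        ext u
        simp only [← hpol]
        exact stein_one q (pol u)
    _ = _ := by
        rw [integral_congr_ae (ae_of_all _ eR), integral_add i12 i3, integral_add i1 i2,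
          integral_const_mul, integral_const_mul, integral_const_mul]

end JointGauss

/-! ### The diagram bound -/

/-- Twice the absolute moment of order `e` of the standard Gaussian law; the factor `2` accounts
for the bound `|A^a B^b| ≤ |A|^e + |B|^e` with `e = a + b`. -/
def mom (e : ℕ) : ℝ := 2 * ∫ t, |t| ^ e ∂(gaussianReal 0 1)

lemma mom_nonneg (e : ℕ) : 0 ≤ mom e :=
  mul_nonneg zero_le_two (integral_nonneg fun _ => by positivity)

/-- Total weight of contracting `d` of `e` first-chaos factors with Hermite legs (each contraction
being at most `β`) and taking the moment of the remaining ones (each of variance at most `s²`). -/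
def wt (β s : ℝ) (e d : ℕ) : ℝ := (e.descFactorial d : ℝ) * β ^ d * (s ^ (e - d) * mom (e - d))

lemma wt_nonneg {β s : ℝ} (hβ : 0 ≤ β) (hs : 0 ≤ s) (e d : ℕ) : 0 ≤ wt β s e d := by
  have := mom_nonneg (e - d)
  unfold wt; positivity

lemma wt_succ (β s : ℝ) (e d : ℕ) : wt β s (e + 1) (d + 1) = (e + 1) * β * wt β s e d := by
  simp only [wt, Nat.succ_descFactorial_succ, Nat.add_sub_add_right]
  push_cast; ring

lemma wt_zero_succ (β s : ℝ) (d : ℕ) : wt β s 0 (d + 1) = 0 := by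
  simp [wt]

lemma wt_of_lt (β s : ℝ) {e d : ℕ} (h : e < d) : wt β s e d = 0 := by
  simp [wt, Nat.descFactorial_eq_zero_iff_lt.2 h]

/-- The diagram bound for `E[H_q(X) H_{q'}(Y) A^a B^b]` with `a + b = e`: `r` counts the
contractions between the two Hermite factors. -/
def diag (R β s : ℝ) (q q' e : ℕ) : ℝ :=
  ∑ r ∈ Finset.range (q' + 1),
    (r.factorial : ℝ) * (q.choose r : ℝ) * (q'.choose r : ℝ) * R ^ r * wt β s e (q + q' - 2 * r)

lemma diag_nonneg {R β s : ℝ} (hR : 0 ≤ R) (hβ : 0 ≤ β) (hs : 0 ≤ s) (q q' e : ℕ) :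
    0 ≤ diag R β s q q' e :=
  Finset.sum_nonneg fun r _ => by
    have := wt_nonneg hβ hs e (q + q' - 2 * r)
    positivity

lemma diag_zero (R β s : ℝ) (q' e : ℕ) : diag R β s 0 q' e = wt β s e q' := by
  rw [diag, Finset.sum_eq_single 0]
  · simp
  · intro r _ hr
    obtain ⟨r, rfl⟩ := Nat.exists_eq_succ_of_ne_zero hr
    simp
  · simp

/-- One step of the diagram recursion when the contracted leg of the first Hermite factor meets
one of the `e` first-chaos factors. -/
lemma diag_term (R β s : ℝ) (q q' e r : ℕ) :
    (r.factorial : ℝ) * (q.choose r : ℝ) * (q'.choose r : ℝ) * R ^ r *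
        wt β s e (q + 1 + q' - 2 * r) =
      e * β * ((r.factorial : ℝ) * (q.choose r : ℝ) * (q'.choose r : ℝ) * R ^ r *
        wt β s (e - 1) (q + q' - 2 * r)) := by
  rcases lt_or_ge q r with h | h
  · simp [Nat.choose_eq_zero_of_lt h]
  rcases lt_or_ge q' r with h' | h'
  · simp [Nat.choose_eq_zero_of_lt h']
  have hd : q + 1 + q' - 2 * r = (q + q' - 2 * r) + 1 := by omega
  rw [hd]
  cases e with
  | zero => simp [wt_zero_succ]
  | succ e =>
    rw [wt_succ, Nat.add_sub_cancel]
    push_cast; ring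

/-- Pascal's rule turns the contraction recursion into an identity for `diag`. -/
lemma diag_succ (R β s : ℝ) (q q' e : ℕ) :
    diag R β s (q + 1) q' e =
      q' * R * diag R β s q (q' - 1) e + e * β * diag R β s q q' (e - 1) := by
  cases q' with
  | zero =>
    have := diag_term R β s q 0 e 0
    simp only [diag, zero_add, Finset.sum_range_one]
    simpa using this
  | succ p =>
    rw [Nat.add_sub_cancel]
    have h2 : e * β * diag R β s q (p + 1) (e - 1) =
        ∑ r ∈ Finset.range (p + 1 + 1), (r.factorial : ℝ) * (q.choose r : ℝ) *
          ((p + 1).choose r : ℝ) * R ^ r * wt β s e (q + 1 + (p + 1) - 2 * r) := by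
      rw [diag, Finset.mul_sum]
      exact Finset.sum_congr rfl fun r _ => (diag_term R β s q (p + 1) e r).symm
    rw [h2, diag, diag, Finset.sum_range_succ', Finset.sum_range_succ' _ (p + 1), Finset.mul_sum,
      ← add_assoc (Finset.sum _ _), ← Finset.sum_add_distrib]
    congr 1
    · refine Finset.sum_congr rfl fun r _ => ?_
      have hd : q + 1 + (p + 1) - 2 * (r + 1) = q + p - 2 * r := by omega
      have hc : ((p + 1 : ℕ) : ℝ) * (p.choose r : ℝ) =
          ((p + 1).choose (r + 1) : ℝ) * ((r + 1 : ℕ) : ℝ) := by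
        exact_mod_cast Nat.add_one_mul_choose_eq p r
      rw [hd, Nat.choose_succ_succ q r, Nat.factorial_succ]
      push_cast at hc ⊢
      linear_combination (-(r.factorial : ℝ) * (q.choose r : ℝ) * R ^ (r + 1) *
        wt β s e (q + p - 2 * r)) * hc
    · simp

/-- Absolute moments of a centered Gaussian of variance at most `s²`, by scaling. -/
lemma gaussian_abs_moment {P : Measure Ω} {A : Ω → ℝ} {v : ℝ≥0} {s : ℝ} (mA : Measurable A)
    (hA : P.map A = gaussianReal 0 v) (hs : 0 ≤ s) (hv : (v : ℝ) ≤ s ^ 2) (e : ℕ) :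
    ∫ ω, |A ω| ^ e ∂P ≤ s ^ e * (mom e / 2) := by
  have h1 : ∫ ω, |A ω| ^ e ∂P = ∫ t, |t| ^ e ∂(gaussianReal 0 v) := by
    rw [← hA, integral_map mA.aemeasurable (by fun_prop)]
  have h2 : gaussianReal 0 v = (gaussianReal 0 1).map (fun t => √(v : ℝ) * t) := by
    rw [gaussianReal_map_const_mul]
    congr 1
    · simp
    · ext; simp
  rw [h1, h2, integral_map (by fun_prop) (by fun_prop)]
  simp only [abs_mul, mul_pow, abs_of_nonneg (Real.sqrt_nonneg _)]
  rw [integral_const_mul, mom, mul_div_cancel_left₀ _ two_ne_zero]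
  refine mul_le_mul_of_nonneg_right ?_ (integral_nonneg fun _ => by positivity)
  exact pow_le_pow_left₀ (Real.sqrt_nonneg _) (Real.sqrt_le_iff.2 ⟨hs, hv⟩) e

namespace JointGauss

variable {P : Measure Ω} {X Y A B : Ω → ℝ} {R β s : ℝ} {vA vB : ℝ≥0}

/-- Base case of the diagram bound, without Hermite factors. -/
lemma moment_bound [IsProbabilityMeasure P] (h : JointGauss P X Y A B) (hs : 0 ≤ s)
    (hA : P.map A = gaussianReal 0 vA) (hvA : (vA : ℝ) ≤ s ^ 2)
    (hB : P.map B = gaussianReal 0 vB) (hvB : (vB : ℝ) ≤ s ^ 2) (a b : ℕ) :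
    |∫ ω, A ω ^ a * B ω ^ b ∂P| ≤ wt β s (a + b) 0 := by
  have iA : Integrable (fun ω => |A ω| ^ (a + b)) P := by
    simpa only [abs_pow] using (h.allLpA.pow (a + b)).integrable.abs
  have iB : Integrable (fun ω => |B ω| ^ (a + b)) P := by
    simpa only [abs_pow] using (h.allLpB.pow (a + b)).integrable.abs
  calc |∫ ω, A ω ^ a * B ω ^ b ∂P| ≤ ∫ ω, |A ω ^ a * B ω ^ b| ∂P := abs_integral_le_integral_abs
    _ ≤ ∫ ω, (|A ω| ^ (a + b) + |B ω| ^ (a + b)) ∂P := by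
        refine integral_mono ((h.allLpA.pow a).mul (h.allLpB.pow b)).integrable.abs (iA.add iB)
          fun ω => ?_
        simp only [abs_mul, abs_pow]
        have hA0 := abs_nonneg (A ω)
        have hB0 := abs_nonneg (B ω)
        rcases le_total (|A ω|) (|B ω|) with hle | hle
        · have := pow_le_pow_left₀ hA0 hle a
          calc |A ω| ^ a * |B ω| ^ b ≤ |B ω| ^ a * |B ω| ^ b := by gcongr
            _ ≤ _ := by rw [← pow_add]; linarith [pow_nonneg hA0 (a + b)]
        · calc |A ω| ^ a * |B ω| ^ b ≤ |A ω| ^ a * |A ω| ^ b := by gcongr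
            _ ≤ _ := by rw [← pow_add]; linarith [pow_nonneg hB0 (a + b)]
    _ = ∫ ω, |A ω| ^ (a + b) ∂P + ∫ ω, |B ω| ^ (a + b) ∂P := integral_add iA iB
    _ ≤ s ^ (a + b) * (mom (a + b) / 2) + s ^ (a + b) * (mom (a + b) / 2) :=
        add_le_add (gaussian_abs_moment h.mA hA hs hvA _) (gaussian_abs_moment h.mB hB hs hvB _)
    _ = wt β s (a + b) 0 := by simp [wt]; ring

/-- A factor `a · c · I` coming from a contraction, with `I` bounded in terms of the number
`a + b - 1` of powers left; for `a = 0` both sides are zero. -/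
lemma contraction_le {a b : ℕ} {c I : ℝ} {F : ℕ → ℝ} (hc : |c| ≤ β)
    (hI : |I| ≤ F (a - 1 + b)) : |a * c * I| ≤ a * β * F (a + b - 1) := by
  rcases Nat.eq_zero_or_pos a with rfl | ha
  · simp
  have : a - 1 + b = a + b - 1 := by omega
  rw [this] at hI
  rw [abs_mul, abs_mul, Nat.abs_cast]
  have hβ : 0 ≤ β := (abs_nonneg c).trans hc
  gcongr

/-- Diagram bound with a single Hermite factor: all its `q'` legs are contracted with `A` or
`B`. -/
lemma hermite_one_bound [IsProbabilityMeasure P] (h : JointGauss P X Y A B)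
    (hY : P.map Y = gaussianReal 0 1) (hs : 0 ≤ s)
    (hA : P.map A = gaussianReal 0 vA) (hvA : (vA : ℝ) ≤ s ^ 2)
    (hB : P.map B = gaussianReal 0 vB) (hvB : (vB : ℝ) ≤ s ^ 2)
    (cYA : |∫ ω, Y ω * A ω ∂P| ≤ β) (cYB : |∫ ω, Y ω * B ω ∂P| ≤ β) (q' a b : ℕ) :
    |∫ ω, Hq q' (Y ω) * (A ω ^ a * B ω ^ b) ∂P| ≤ wt β s (a + b) q' := by
  induction q' generalizing a b with
  | zero => simpa only [Hq_zero, one_mul] using h.moment_bound hs hA hvA hB hvB a b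
  | succ q ih =>
    have hst := h.swap.stein hY q 0 a b
    simp only [Hq_zero, one_mul, Nat.cast_zero, zero_mul, zero_add] at hst
    have h1 := contraction_le (F := fun e => wt β s e q) cYA (ih (a - 1) b)
    have h2 := contraction_le (F := fun e => wt β s e q) (a := b) (b := a) cYB
      (by rw [add_comm]; exact ih a (b - 1))
    rw [hst]
    refine (abs_add_le _ _).trans ((add_le_add h1 h2).trans (le_of_eq ?_))
    simp only [add_comm b a]
    cases hab : a + b with
    | zero =>
      obtain ⟨rfl, rfl⟩ : a = 0 ∧ b = 0 := by omega
      simp [wt_zero_succ]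
    | succ e =>
      have : ((a : ℝ) + b) = e + 1 := by exact_mod_cast hab
      rw [wt_succ, Nat.add_sub_cancel, ← this]; ring

/-- Diagram bound for the mixed moment of two Hermite factors and two powers, by iterating the
contraction identity `stein` on the legs of the first Hermite factor. -/
lemma hermite_bound [IsProbabilityMeasure P] (h : JointGauss P X Y A B)
    (hX : P.map X = gaussianReal 0 1)
    (hY : P.map Y = gaussianReal 0 1) (hs : 0 ≤ s)
    (hA : P.map A = gaussianReal 0 vA) (hvA : (vA : ℝ) ≤ s ^ 2)
    (hB : P.map B = gaussianReal 0 vB) (hvB : (vB : ℝ) ≤ s ^ 2)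
    (cXY : |∫ ω, X ω * Y ω ∂P| ≤ R)
    (cXA : |∫ ω, X ω * A ω ∂P| ≤ β) (cXB : |∫ ω, X ω * B ω ∂P| ≤ β)
    (cYA : |∫ ω, Y ω * A ω ∂P| ≤ β) (cYB : |∫ ω, Y ω * B ω ∂P| ≤ β) (q q' a b : ℕ) :
    |∫ ω, Hq q (X ω) * (Hq q' (Y ω) * (A ω ^ a * B ω ^ b)) ∂P| ≤ diag R β s q q' (a + b) := by
  have hR : 0 ≤ R := (abs_nonneg _).trans cXY
  induction q generalizing q' a b with
  | zero =>
    rw [diag_zero]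
    simpa only [Hq_zero, one_mul] using
      h.hermite_one_bound hY hs hA hvA hB hvB cYA cYB q' a b
  | succ q ih =>
    have h0 : |q' * (∫ ω, X ω * Y ω ∂P) *
          ∫ ω, Hq q (X ω) * (Hq (q' - 1) (Y ω) * (A ω ^ a * B ω ^ b)) ∂P| ≤
        q' * R * diag R β s q (q' - 1) (a + b) := by
      rw [abs_mul, abs_mul, Nat.abs_cast]
      have := ih (q' - 1) a b
      gcongr
    have h1 := contraction_le (F := fun e => diag R β s q q' e) cXA (ih q' (a - 1) b)
    have h2 := contraction_le (F := fun e => diag R β s q q' e) (a := b) (b := a) cXB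
      (by rw [add_comm]; exact ih q' a (b - 1))
    rw [h.stein hX, diag_succ]
    refine (abs_add_three _ _ _).trans ((add_le_add_three h0 h1 h2).trans (le_of_eq ?_))
    simp only [add_comm b a]
    push_cast; ring

end JointGauss

/-! ### Correlations of fractional Gaussian noise -/

/-- `t ↦ |t|^p` is `p`-Hölder with constant `1` for `0 ≤ p ≤ 1`. -/
lemma abs_rpow_sub_le {p : ℝ} (hp : 0 ≤ p) (hp1 : p ≤ 1) (y z : ℝ) :
    abs (|y| ^ p - |z| ^ p) ≤ |y - z| ^ p := by
  have key : ∀ y z : ℝ, |y| ^ p ≤ |z| ^ p + |y - z| ^ p := fun y z =>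
    (Real.rpow_le_rpow (abs_nonneg y) (by simpa using abs_add_le z (y - z)) hp).trans
      (Real.rpow_add_le_add_rpow (abs_nonneg _) (abs_nonneg _) hp hp1)
  have h1 := key y z
  have h2 := key z y
  rw [abs_sub_comm z y] at h2
  rw [abs_le]
  constructor <;> linarith

section rho

variable {ν : ℝ}

lemma rho_neg (k : ℤ) : rho ν (-k) = rho ν k := by
  unfold rho
  push_cast
  rw [show (-(k : ℝ) + 1) = -(k - 1) by ring, show (-(k : ℝ) - 1) = -(k + 1) by ring, abs_neg,
    abs_neg, abs_neg]
  ring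

lemma rho_zero (hν : 0 < ν) : rho ν 0 = 1 := by
  have : (2 * ν) ≠ 0 := by positivity
  simp [rho, Real.zero_rpow this]

/-- Away from `0` the correlations are nonpositive (concavity of `t ↦ t^{2ν}`) and telescope. -/
lemma abs_rho_succ (hν : 0 < ν) (hν2 : ν ≤ 1 / 2) (j : ℕ) :
    |rho ν ((j : ℤ) + 1)| =
      ((((j : ℝ) + 1) ^ (2 * ν) - (j : ℝ) ^ (2 * ν)) -
        ((((j + 1 : ℕ) : ℝ) + 1) ^ (2 * ν) - ((j + 1 : ℕ) : ℝ) ^ (2 * ν))) / 2 := by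
  have hj : (0 : ℝ) ≤ j := Nat.cast_nonneg j
  have hc := (Real.concaveOn_rpow (p := 2 * ν) (by positivity) (by linarith)).2
    (show (j : ℝ) ∈ Set.Ici 0 from hj) (show (j : ℝ) + 2 ∈ Set.Ici 0 from by
      simp only [Set.mem_Ici]; positivity)
    (show (0 : ℝ) ≤ 1 / 2 by norm_num) (show (0 : ℝ) ≤ 1 / 2 by norm_num) (by norm_num)
  simp only [smul_eq_mul] at hc
  rw [show 1 / 2 * (j : ℝ) + 1 / 2 * ((j : ℝ) + 2) = j + 1 by ring] at hc
  unfold rho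
  push_cast
  rw [show (j : ℝ) + 1 + 1 = j + 2 by ring, show (j : ℝ) + 1 - 1 = j by ring,
    abs_of_nonneg (show (0 : ℝ) ≤ (j : ℝ) + 2 by positivity), abs_of_nonneg hj,
    abs_of_nonneg (show (0 : ℝ) ≤ (j : ℝ) + 1 by positivity), abs_of_nonpos (by linarith)]
  ring

lemma sum_abs_rho_succ (hν : 0 < ν) (hν2 : ν ≤ 1 / 2) (N : ℕ) :
    ∑ j ∈ Finset.range N, |rho ν ((j : ℤ) + 1)| ≤ 1 / 2 := by
  have h0 : (2 * ν) ≠ 0 := by positivity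
  have hN : (N : ℝ) ^ (2 * ν) ≤ ((N : ℝ) + 1) ^ (2 * ν) :=
    Real.rpow_le_rpow (by positivity) (by linarith) (by positivity)
  simp only [abs_rho_succ hν hν2]
  rw [← Finset.sum_div,
    Finset.sum_range_sub' (fun j : ℕ => ((j : ℝ) + 1) ^ (2 * ν) - (j : ℝ) ^ (2 * ν))]
  simp only [Nat.cast_zero, zero_add, Real.one_rpow, Real.zero_rpow h0]
  linarith

lemma abs_rho_le_one (hν : 0 < ν) (hν2 : ν ≤ 1 / 2) (k : ℤ) : |rho ν k| ≤ 1 := by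
  have hnat : ∀ j : ℕ, |rho ν (j : ℤ)| ≤ 1 := by
    intro j
    cases j with
    | zero => simp [rho_zero hν]
    | succ j =>
      have h1 := Finset.single_le_sum (f := fun j : ℕ => |rho ν ((j : ℤ) + 1)|)
        (fun _ _ => abs_nonneg _) (Finset.self_mem_range_succ j)
      have h2 := sum_abs_rho_succ hν hν2 (j + 1)
      push_cast
      linarith
  rcases Int.eq_nat_or_neg k with ⟨j, rfl | rfl⟩
  · exact hnat j
  · rw [rho_neg]; exact hnat j

/-- Absolute summability of the correlations: `1` from the diagonal and at most `1/2` from each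
side of it. -/
lemma sum_abs_rho (hν : 0 < ν) (hν2 : ν ≤ 1 / 2) {n k : ℕ} (hk : k < n) :
    ∑ l ∈ Finset.range n, |rho ν ((k : ℤ) - l)| ≤ 2 := by
  rw [Finset.range_eq_Ico, ← Finset.sum_Ico_consecutive _ (Nat.zero_le k) hk.le,
    ← Finset.range_eq_Ico, ← Finset.sum_range_reflect, Finset.sum_Ico_eq_sum_range]
  obtain ⟨N, hN⟩ := Nat.exists_eq_add_of_lt hk
  have e : n - k = N + 1 := by omega
  rw [e, Finset.sum_range_succ']
  have h1 : ∑ j ∈ Finset.range k, |rho ν ((k : ℤ) - ((k - 1 - j : ℕ) : ℤ))| =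
      ∑ j ∈ Finset.range k, |rho ν ((j : ℤ) + 1)| := by
    refine Finset.sum_congr rfl fun j hj => ?_
    have := Finset.mem_range.1 hj
    congr 2; omega
  have h2 : ∑ j ∈ Finset.range N, |rho ν ((k : ℤ) - ((k + (j + 1) : ℕ) : ℤ))| =
      ∑ j ∈ Finset.range N, |rho ν ((j : ℤ) + 1)| := by
    refine Finset.sum_congr rfl fun j _ => ?_
    rw [← rho_neg]
    congr 2; push_cast; ring
  rw [h1, h2]
  have h3 := sum_abs_rho_succ hν hν2 k
  have h4 := sum_abs_rho_succ hν hν2 N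
  simp only [add_zero, sub_self, rho_zero hν, abs_one]
  linarith

end rho

/-! ### Increments of fractional Brownian motion -/

namespace IsFBM

variable {P : Measure Ω} {ν : ℝ} {x : ℝ → Ω → ℝ}

lemma incr_law (h : IsFBM P ν x) (hν : 0 < ν) {s t : ℝ} (hs : s ∈ Set.Icc (0 : ℝ) 1)
    (ht : t ∈ Set.Icc (0 : ℝ) 1) :
    P.map (fun ω => x t ω - x s ω) = gaussianReal 0 (|t - s| ^ (2 * ν)).toNNReal := by
  have h0 : (2 * ν) ≠ 0 := by positivity
  have := h.2.2 2 ![t, s] (by simp [Fin.forall_fin_two, hs.1, hs.2, ht.1, ht.2]) ![1, -1]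
  convert this using 2
  · ext ω; simp [Fin.sum_univ_two]; ring
  · congr 1
    simp only [Fin.sum_univ_two, fbmCov]
    simp only [Matrix.cons_val_zero, Matrix.cons_val_one, sub_self, abs_zero, Real.zero_rpow h0,
      abs_sub_comm s t]
    ring

lemma incr_allLp (h : IsFBM P ν x) (hν : 0 < ν) {s t : ℝ} (hs : s ∈ Set.Icc (0 : ℝ) 1)
    (ht : t ∈ Set.Icc (0 : ℝ) 1) : AllLp P (fun ω => x t ω - x s ω) :=
  .of_gaussian ((h.1 t).sub (h.1 s)) (h.incr_law hν hs ht)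

lemma incr_sq (h : IsFBM P ν x) (hν : 0 < ν) {s t : ℝ} (hs : s ∈ Set.Icc (0 : ℝ) 1)
    (ht : t ∈ Set.Icc (0 : ℝ) 1) :
    ∫ ω, (x t ω - x s ω) ^ 2 ∂P = |t - s| ^ (2 * ν) := by
  have mm : Measurable (fun ω => x t ω - x s ω) := (h.1 t).sub (h.1 s)
  have hv := variance_fun_id_gaussianReal (μ := 0) (v := (|t - s| ^ (2 * ν)).toNNReal)
  rw [variance_eq_integral measurable_id'.aemeasurable, integral_id_gaussianReal,
    ← h.incr_law hν hs ht,
    integral_map mm.aemeasurable (by fun_prop)] at hv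
  simpa [Real.rpow_nonneg] using hv

/-- Covariance of two increments, by polarization of the variances of increments. -/
lemma incr_cov (h : IsFBM P ν x) (hν : 0 < ν) {a b u t : ℝ} (ha : a ∈ Set.Icc (0 : ℝ) 1)
    (hb : b ∈ Set.Icc (0 : ℝ) 1) (hu : u ∈ Set.Icc (0 : ℝ) 1) (ht : t ∈ Set.Icc (0 : ℝ) 1) :
    ∫ ω, (x b ω - x a ω) * (x t ω - x u ω) ∂P =
      (|t - a| ^ (2 * ν) + |u - b| ^ (2 * ν) - (|t - b| ^ (2 * ν) + |u - a| ^ (2 * ν))) / 2 := by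
  have I : ∀ {s t : ℝ}, s ∈ Set.Icc (0 : ℝ) 1 → t ∈ Set.Icc (0 : ℝ) 1 →
      Integrable (fun ω => (x t ω - x s ω) ^ 2) P := fun hs ht =>
    ((h.incr_allLp hν hs ht).mul (h.incr_allLp hν hs ht)).integrable.congr
      (ae_of_all _ fun ω => by ring)
  have J1 : Integrable (fun ω => (x t ω - x a ω) ^ 2 + (x u ω - x b ω) ^ 2) P :=
    (I ha ht).add (I hb hu)
  have J2 : Integrable (fun ω => (x t ω - x b ω) ^ 2 + (x u ω - x a ω) ^ 2) P :=
    (I hb ht).add (I ha hu)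
  rw [← h.incr_sq hν ha ht, ← h.incr_sq hν hb hu, ← h.incr_sq hν hb ht, ← h.incr_sq hν ha hu,
    ← integral_add (I ha ht) (I hb hu), ← integral_add (I hb ht) (I ha hu),
    ← integral_sub J1 J2, ← integral_div]
  congr 1; ext ω; ring

/-- Four increments, the first two rescaled by `c`, are jointly Gaussian. -/
lemma joint (h : IsFBM P ν x) (c : ℝ) (t : Fin 8 → ℝ) (ht : ∀ j, t j ∈ Set.Icc (0 : ℝ) 1) :
    JointGauss P (fun ω => c * (x (t 0) ω - x (t 1) ω)) (fun ω => c * (x (t 2) ω - x (t 3) ω))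
      (fun ω => x (t 4) ω - x (t 5) ω) (fun ω => x (t 6) ω - x (t 7) ω) := by
  have hm := h.1
  refine ⟨by fun_prop, by fun_prop, by fun_prop, by fun_prop, fun c₀ c₁ c₂ c₃ => ?_⟩
  have hl := h.2.2 8 t ht ![c₀ * c, -(c₀ * c), c₁ * c, -(c₁ * c), c₂, -c₂, c₃, -c₃]
  refine ⟨_, Eq.trans ?_ hl⟩
  congr 1
  ext ω
  simp [Fin.sum_univ_eight]
  ring

end IsFBM


section pair

variable {P : Measure Ω} {ν : ℝ} {x : ℝ → Ω → ℝ} {n m k l : ℕ} {u w : ℝ}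

lemma grid_mem (hk : k ≤ n) : (k : ℝ) / n ∈ Set.Icc (0 : ℝ) 1 :=
  ⟨by positivity, div_le_one_of_le₀ (by exact_mod_cast hk) (by positivity)⟩

lemma grid_succ_mem (hk : k < n) : ((k : ℝ) + 1) / n ∈ Set.Icc (0 : ℝ) 1 := by
  exact_mod_cast grid_mem (k := k + 1) hk

namespace IsFBM

/-- The rescaled increments over the cells of the grid are standard Gaussian. -/
lemma scaled_law (h : IsFBM P ν x) (hν : 0 < ν) (hk : k < n) :
    P.map (fun ω => (n : ℝ) ^ ν * (x (((k : ℝ) + 1) / n) ω - x ((k : ℝ) / n) ω)) =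
      gaussianReal 0 1 := by
  have hn : (0 : ℝ) < n := by exact_mod_cast (Nat.zero_le k).trans_lt hk
  have hl := h.incr_law hν (grid_mem hk.le) (grid_succ_mem hk)
  have mm : Measurable (fun ω => x (((k : ℝ) + 1) / n) ω - x ((k : ℝ) / n) ω) :=
    (h.1 _).sub (h.1 _)
  have hc : P.map (fun ω => (n : ℝ) ^ ν * (x (((k : ℝ) + 1) / n) ω - x ((k : ℝ) / n) ω)) =
      (P.map (fun ω => x (((k : ℝ) + 1) / n) ω - x ((k : ℝ) / n) ω)).map
        (fun t => (n : ℝ) ^ ν * t) := by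
    rw [Measure.map_map (by fun_prop) mm]; rfl
  rw [hc, hl, gaussianReal_map_const_mul]
  congr 1
  · simp
  · ext
    have e : ((k : ℝ) + 1) / n - k / n = (n : ℝ)⁻¹ := by field_simp; ring
    simp only [NNReal.coe_mul, NNReal.coe_mk, NNReal.coe_one]
    rw [Real.coe_toNNReal _ (by positivity), e, abs_of_pos (inv_pos.2 hn), Real.inv_rpow hn.le,
      ← Real.rpow_natCast, ← Real.rpow_mul hn.le]
    push_cast
    rw [mul_comm ν 2]
    exact mul_inv_cancel₀ (by positivity)

/-- The correlation of two rescaled cell increments. -/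
lemma scaled_cov (h : IsFBM P ν x) (hν : 0 < ν) (hk : k < n) (hl : l < n) :
    ∫ ω, ((n : ℝ) ^ ν * (x (((k : ℝ) + 1) / n) ω - x ((k : ℝ) / n) ω)) *
      ((n : ℝ) ^ ν * (x (((l : ℝ) + 1) / n) ω - x ((l : ℝ) / n) ω)) ∂P =
      rho ν ((k : ℤ) - l) := by
  have hn : (0 : ℝ) < n := by exact_mod_cast (Nat.zero_le k).trans_lt hk
  have hc := h.incr_cov hν (grid_mem hk.le) (grid_succ_mem hk) (grid_mem hl.le) (grid_succ_mem hl)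
  have e : ∀ z : ℝ, |z / n| ^ (2 * ν) = |z| ^ (2 * ν) * ((n : ℝ) ^ (2 * ν))⁻¹ := fun z => by
    rw [abs_div, abs_of_pos hn, Real.div_rpow (abs_nonneg _) hn.le, div_eq_mul_inv]
  simp_rw [mul_mul_mul_comm ((n : ℝ) ^ ν)]
  rw [integral_const_mul, hc, ← Real.rpow_add hn, ← two_mul]
  simp only [← sub_div, e]
  unfold rho
  push_cast
  rw [abs_sub_comm ((l : ℝ) + 1) k, abs_sub_comm (l : ℝ) (k + 1), abs_sub_comm (l : ℝ) k,
    show (k : ℝ) - (l + 1) = k - l - 1 by ring, show (k : ℝ) + 1 - l = k - l + 1 by ring,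
    show (l : ℝ) + 1 - (k + 1) = -(k - l) by ring, abs_neg]
  have := (Real.rpow_pos_of_pos hn (2 * ν)).ne'
  field_simp
  ring

/-- A rescaled cell increment has covariance at most `n^{-ν}` with any increment, since
`t ↦ |t|^{2ν}` is `2ν`-Hölder. -/
lemma scaled_cov_le (h : IsFBM P ν x) (hν : 0 < ν) (hν2 : ν ≤ 1 / 2) (hk : k < n)
    {s t : ℝ} (hs : s ∈ Set.Icc (0 : ℝ) 1) (ht : t ∈ Set.Icc (0 : ℝ) 1) :
    |∫ ω, ((n : ℝ) ^ ν * (x (((k : ℝ) + 1) / n) ω - x ((k : ℝ) / n) ω)) *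
      (x t ω - x s ω) ∂P| ≤ (n : ℝ) ^ (-ν) := by
  have hn : (0 : ℝ) < n := by exact_mod_cast (Nat.zero_le k).trans_lt hk
  have hc := h.incr_cov hν (grid_mem hk.le) (grid_succ_mem hk) hs ht
  have hN := Real.rpow_pos_of_pos hn ν
  have e : |((k : ℝ) + 1) / n - k / n| ^ (2 * ν) = (n : ℝ) ^ (-(2 * ν)) := by
    rw [show ((k : ℝ) + 1) / n - k / n = (n : ℝ)⁻¹ by field_simp; ring,
      abs_of_pos (inv_pos.2 hn), Real.inv_rpow hn.le, Real.rpow_neg hn.le]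
  have h1 := abs_rpow_sub_le (p := 2 * ν) (by positivity) (by linarith)
    (t - k / n) (t - ((k : ℝ) + 1) / n)
  have h2 := abs_rpow_sub_le (p := 2 * ν) (by positivity) (by linarith)
    (s - ((k : ℝ) + 1) / n) (s - k / n)
  rw [show t - k / n - (t - ((k : ℝ) + 1) / n) = ((k : ℝ) + 1) / n - k / n by ring, e] at h1
  rw [show s - ((k : ℝ) + 1) / n - (s - k / n) = -(((k : ℝ) + 1) / n - k / n) by ring, abs_neg,
    e] at h2
  simp_rw [mul_assoc]
  rw [integral_const_mul, hc, abs_mul, abs_of_pos hN,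
    show -ν = ν + -(2 * ν) by ring, Real.rpow_add hn]
  refine mul_le_mul_of_nonneg_left ?_ hN.le
  rw [abs_le] at h1 h2 ⊢
  constructor <;> linarith [h1.1, h1.2, h2.1, h2.2]

/-- Increments over time at most `1 / m` have variance at most `m^{-2ν}`. -/
lemma incr_var_le (hν : 0 < ν) (hm : 0 < m) {s t : ℝ} (hst : s ≤ t) (hd : t - s ≤ 1 / m) :
    (((|t - s| ^ (2 * ν)).toNNReal : ℝ≥0) : ℝ) ≤ ((m : ℝ) ^ (-ν)) ^ 2 := by
  have hm0 : (0 : ℝ) < m := by exact_mod_cast hm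
  rw [Real.coe_toNNReal _ (by positivity), abs_of_nonneg (sub_nonneg.2 hst),
    ← Real.rpow_natCast, ← Real.rpow_mul hm0.le]
  push_cast
  rw [show -ν * 2 = -(2 * ν) by ring, Real.rpow_neg hm0.le, ← Real.inv_rpow hm0.le, ← one_div]
  exact Real.rpow_le_rpow (sub_nonneg.2 hst) hd (by positivity)

lemma term_integrable [IsProbabilityMeasure P] (h : IsFBM P ν x) (hν : 0 < ν) (hk : k < n)
    (hl : l < n) (hu : u ∈ Set.Icc (0 : ℝ) 1) (hw : w ∈ Set.Icc (0 : ℝ) 1) (q q' i : ℕ) :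
    Integrable (fun ω => (xlift x i u (k / n) ω * hermIncr x ν n q k ω) *
      (xlift x i w (l / n) ω * hermIncr x ν n q' l ω)) P := by
  have key : ∀ {k : ℕ} {u : ℝ} (q : ℕ), k < n → u ∈ Set.Icc (0 : ℝ) 1 →
      AllLp P (fun ω => xlift x i u (k / n) ω * hermIncr x ν n q k ω) := by
    intro k u q hk hu
    have hA := ((h.incr_allLp hν hu (grid_mem hk.le)).pow i).mul
      (AllLp.const (P := P) ((i.factorial : ℝ)⁻¹))
    have hX := ((AllLp.const (P := P) ((n : ℝ) ^ ν)).mul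
      (h.incr_allLp hν (grid_mem hk.le) (grid_succ_mem hk))).hermite q
    exact hA.mul hX
  exact ((key q hk hu).mul (key q' hl hw)).integrable

/-- Bound for the covariance of two summands of the coarse-grained Hermite sums. -/
lemma term_bound [IsProbabilityMeasure P] (h : IsFBM P ν x) (hν : 0 < ν) (hν2 : ν ≤ 1 / 2)
    (hm : 0 < m) (hk : k < n) (hl : l < n)
    (hu : u ∈ Set.Icc (0 : ℝ) 1) (hw : w ∈ Set.Icc (0 : ℝ) 1)
    (huk : u ≤ k / n) (hwl : w ≤ l / n) (hum : k / n - u ≤ 1 / m) (hwm : l / n - w ≤ 1 / m)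
    (q q' i : ℕ) :
    |∫ ω, (xlift x i u (k / n) ω * hermIncr x ν n q k ω) *
      (xlift x i w (l / n) ω * hermIncr x ν n q' l ω) ∂P| ≤
      diag |rho ν ((k : ℤ) - l)| ((n : ℝ) ^ (-ν)) ((m : ℝ) ^ (-ν)) q q' (i + i) := by
  have hJ := h.joint ((n : ℝ) ^ ν) ![((k : ℝ) + 1) / n, k / n, ((l : ℝ) + 1) / n, l / n, k / n, u,
    l / n, w] (by
      have h1 := grid_mem hk.le
      have h2 := grid_mem hl.le
      have h3 := grid_succ_mem hk
      have h4 := grid_succ_mem hl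
      intro j
      fin_cases j <;> assumption)
  have hb := hJ.hermite_bound (h.scaled_law hν hk) (h.scaled_law hν hl)
    (show 0 ≤ (m : ℝ) ^ (-ν) by positivity)
    (h.incr_law hν hu (grid_mem hk.le)) (incr_var_le hν hm huk hum)
    (h.incr_law hν hw (grid_mem hl.le)) (incr_var_le hν hm hwl hwm)
    (le_of_eq (congrArg _ (h.scaled_cov hν hk hl)))
    (h.scaled_cov_le hν hν2 hk hu (grid_mem hk.le))
    (h.scaled_cov_le hν hν2 hk hw (grid_mem hl.le))
    (h.scaled_cov_le hν hν2 hl hu (grid_mem hk.le))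
    (h.scaled_cov_le hν hν2 hl hw (grid_mem hl.le)) q q' i i
  refine le_trans ?_ hb
  have hf : (1 : ℝ) ≤ i.factorial := by exact_mod_cast Nat.one_le_iff_ne_zero.2 i.factorial_ne_zero
  have hi : ((i.factorial : ℝ)⁻¹ * (i.factorial : ℝ)⁻¹) ≤ 1 := by
    have := inv_le_one_of_one_le₀ hf
    exact mul_le_one₀ this (by positivity) this
  have e : ∀ ω, (xlift x i u (k / n) ω * hermIncr x ν n q k ω) *
      (xlift x i w (l / n) ω * hermIncr x ν n q' l ω) =
      ((i.factorial : ℝ)⁻¹ * (i.factorial : ℝ)⁻¹) *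
      (Hq q ((n : ℝ) ^ ν * (x (((k : ℝ) + 1) / n) ω - x ((k : ℝ) / n) ω)) *
        (Hq q' ((n : ℝ) ^ ν * (x (((l : ℝ) + 1) / n) ω - x ((l : ℝ) / n) ω)) *
          ((x (k / n) ω - x u ω) ^ i * (x (l / n) ω - x w ω) ^ i))) := fun ω => by
    unfold xlift hermIncr; ring
  simp_rw [e]
  rw [integral_const_mul, abs_mul, abs_of_nonneg (by positivity)]
  exact mul_le_of_le_one_left (abs_nonneg _) hi

end IsFBM

end pair

/-! ### Size of the diagram bound -/

/-- A constant dominating all combinatorial weights with at most `N` first-chaos factors. -/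
def comb (N : ℕ) : ℝ :=
  ∑ e ∈ Finset.range N, ∑ d ∈ Finset.range N, (e.descFactorial d : ℝ) * mom (e - d)

lemma comb_term_nonneg (e d : ℕ) : 0 ≤ (e.descFactorial d : ℝ) * mom (e - d) :=
  mul_nonneg (by positivity) (mom_nonneg _)

lemma comb_nonneg (N : ℕ) : 0 ≤ comb N :=
  Finset.sum_nonneg fun e _ => Finset.sum_nonneg fun d _ => comb_term_nonneg e d

lemma le_comb {N e d : ℕ} (he : e < N) (hd : d < N) :
    (e.descFactorial d : ℝ) * mom (e - d) ≤ comb N :=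
  (Finset.single_le_sum (f := fun d => (e.descFactorial d : ℝ) * mom (e - d))
    (fun d _ => comb_term_nonneg e d) (Finset.mem_range.2 hd)).trans
  (Finset.single_le_sum (f := fun e => ∑ d ∈ Finset.range N, (e.descFactorial d : ℝ) * mom (e - d))
    (fun e _ => Finset.sum_nonneg fun d _ => comb_term_nonneg e d) (Finset.mem_range.2 he))

/-- Either no first-chaos factor is contracted, giving `s^e`, or at least one is, giving `β`. -/
lemma wt_le {β s : ℝ} (hβ : 0 ≤ β) (hβ1 : β ≤ 1) (hs : 0 ≤ s) (hs1 : s ≤ 1) {N e d : ℕ}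
    (he : e < N) (hd : d < N) : wt β s e d ≤ comb N * (s ^ e + β) := by
  have h1 : wt β s e d = ((e.descFactorial d : ℝ) * mom (e - d)) * (β ^ d * s ^ (e - d)) := by
    unfold wt; ring
  have h2 : β ^ d * s ^ (e - d) ≤ s ^ e + β := by
    cases d with
    | zero => simp [hβ]
    | succ d =>
      have h3 : β ^ (d + 1) ≤ β := pow_le_of_le_one hβ hβ1 (by omega)
      have h4 : s ^ (e - (d + 1)) ≤ 1 := pow_le_one₀ hs hs1
      have h5 : 0 ≤ s ^ e := by positivity
      nlinarith [mul_le_mul h3 h4 (by positivity) hβ]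
  rw [h1]
  exact mul_le_mul (le_comb he hd) h2 (by positivity) (comb_nonneg N)

/-- The combinatorial factor of the estimate. -/
def binSum (q q' i : ℕ) : ℝ :=
  ∑ r ∈ Finset.range (min q q' + 1),
    (if ((q : ℝ) + (q' : ℝ)) / 2 - (i : ℝ) ≤ (r : ℝ) then
      (Nat.factorial r : ℝ) * (Nat.choose q r : ℝ) * (Nat.choose q' r : ℝ) else 0)

lemma binSum_nonneg (q q' i : ℕ) : 0 ≤ binSum q q' i :=
  Finset.sum_nonneg fun r _ => by split_ifs <;> positivity

lemma half_sub_le_iff (q q' i r : ℕ) :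
    ((q : ℝ) + (q' : ℝ)) / 2 - (i : ℝ) ≤ (r : ℝ) ↔ q + q' ≤ 2 * r + 2 * i := by
  have e : q + q' ≤ 2 * r + 2 * i ↔ ((q : ℝ) + q') ≤ 2 * r + 2 * i := by exact_mod_cast Iff.rfl
  rw [e]
  constructor <;> intro h <;> linarith

lemma binSum_eq_zero {q q' i : ℕ} (h : 2 * i < ((q : ℤ) - (q' : ℤ)).natAbs) :
    binSum q q' i = 0 := by
  refine Finset.sum_eq_zero fun r hr => ?_
  rw [Finset.mem_range] at hr
  refine if_neg ?_
  rw [half_sub_le_iff]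
  omega

/-- Size of the diagram bound. The terms with `q + q' - 2r > 2i` vanish, and all the others have
`r ≥ 1` because `q, q' ≥ ℓ > i`, which leaves one factor `R`. -/
lemma diag_le {R β s : ℝ} (hR : 0 ≤ R) (hR1 : R ≤ 1) (hβ : 0 ≤ β) (hβ1 : β ≤ 1) (hs : 0 ≤ s)
    (hs1 : s ≤ 1) {ℓ q q' i : ℕ} (hq : ℓ ≤ q) (hq' : ℓ ≤ q') (hi : i < ℓ) :
    diag R β s q q' (i + i) ≤ R * (comb (2 * ℓ) * (s ^ (i + i) + β)) * binSum q q' i := by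
  have hsub : Finset.range (min q q' + 1) ⊆ Finset.range (q' + 1) :=
    Finset.range_subset_range.2 (by omega)
  have hD : 0 ≤ comb (2 * ℓ) * (s ^ (i + i) + β) :=
    mul_nonneg (comb_nonneg _) (by positivity)
  rw [diag, ← Finset.sum_subset hsub, binSum, Finset.mul_sum]
  · refine Finset.sum_le_sum fun r hr => ?_
    rw [Finset.mem_range] at hr
    split_ifs with hc <;> rw [half_sub_le_iff] at hc
    · have hRr : R ^ r ≤ R := pow_le_of_le_one hR hR1 (by omega)
      have hw := wt_le hβ hβ1 hs hs1 (N := 2 * ℓ) (e := i + i) (d := q + q' - 2 * r)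
        (by omega) (by omega)
      have hw0 := wt_nonneg hβ hs (i + i) (q + q' - 2 * r)
      calc _ = ((r.factorial : ℝ) * (q.choose r : ℝ) * (q'.choose r : ℝ)) *
            (R ^ r * wt β s (i + i) (q + q' - 2 * r)) := by ring
        _ ≤ ((r.factorial : ℝ) * (q.choose r : ℝ) * (q'.choose r : ℝ)) *
            (R * (comb (2 * ℓ) * (s ^ (i + i) + β))) := by gcongr
        _ = _ := by ring
    · rw [wt_of_lt _ _ (by omega)]; simp
  · intro r _ hr
    rw [Finset.mem_range] at hr
    rcases lt_or_ge q r with h | h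
    · simp [Nat.choose_eq_zero_of_lt h]
    · simp [Nat.choose_eq_zero_of_lt (show q' < r by omega)]

/-! ### Summation over the grid -/

lemma abs_integral_sum_mul_sum_le {P : Measure Ω} {n : ℕ} {F G : ℕ → Ω → ℝ} {B : ℕ → ℕ → ℝ}
    (hI : ∀ k < n, ∀ l < n, Integrable (fun ω => F k ω * G l ω) P)
    (hB : ∀ k < n, ∀ l < n, |∫ ω, F k ω * G l ω ∂P| ≤ B k l) :
    |∫ ω, (∑ k ∈ Finset.range n, F k ω) * (∑ l ∈ Finset.range n, G l ω) ∂P| ≤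
      ∑ k ∈ Finset.range n, ∑ l ∈ Finset.range n, B k l := by
  simp_rw [Finset.sum_mul_sum]
  rw [integral_finsetSum _ fun k hk => integrable_finsetSum _ fun l hl =>
    hI k (Finset.mem_range.1 hk) l (Finset.mem_range.1 hl)]
  refine (Finset.abs_sum_le_sum_abs _ _).trans (Finset.sum_le_sum fun k hk => ?_)
  rw [integral_finsetSum _ fun l hl => hI k (Finset.mem_range.1 hk) l (Finset.mem_range.1 hl)]
  exact (Finset.abs_sum_le_sum_abs _ _).trans (Finset.sum_le_sum fun l hl =>
    hB k (Finset.mem_range.1 hk) l (Finset.mem_range.1 hl))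

/-- The contribution of the grid point `k / n` to `∑ j, J_{s_j}^{s_{j+1}}(x^i; h^{n,q})`. -/
def cell (x : ℝ → Ω → ℝ) (ν : ℝ) (n m : ℕ) (S : ℕ → ℝ) (i q k : ℕ) (ω : Ω) : ℝ :=
  ∑ j ∈ Finset.range m, if S j ≤ (k : ℝ) / n ∧ (k : ℝ) / n < S (j + 1) then
    xlift x i (eps n (S j)) ((k : ℝ) / n) ω * hermIncr x ν n q k ω else 0

lemma sum_Jtwo_eq (x : ℝ → Ω → ℝ) (ν : ℝ) (n m : ℕ) (S : ℕ → ℝ) (i q : ℕ) (ω : Ω) :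
    ∑ j ∈ Finset.range m, Jtwo n (xlift x i) (hermIncr x ν n q) (S j) (S (j + 1)) ω =
      ∑ k ∈ Finset.range n, cell x ν n m S i q k ω := by
  unfold Jtwo cell
  rw [Finset.sum_comm]

/-- A grid point lies in at most one block of the coarse partition, so its contribution is a
single product of a rough-path increment and a Hermite increment, or zero. -/
lemma cell_cases (x : ℝ → Ω → ℝ) (ν : ℝ) {n m : ℕ} {S : ℕ → ℝ} (i : ℕ) {k : ℕ} (hk : k < n)
    (h0 : 0 ≤ S 0) (hS : ∀ j < m, S j < S (j + 1)) (hd : ∀ j < m, S (j + 1) - S j ≤ 1 / m) :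
    (∀ q, cell x ν n m S i q k = fun _ => 0) ∨
      ∃ u ∈ Set.Icc (0 : ℝ) 1, u ≤ (k : ℝ) / n ∧ (k : ℝ) / n - u ≤ 1 / m ∧
        ∀ q, cell x ν n m S i q k =
          fun ω => xlift x i u ((k : ℝ) / n) ω * hermIncr x ν n q k ω := by
  have hn : (0 : ℝ) < n := by exact_mod_cast (Nat.zero_le k).trans_lt hk
  have mono : ∀ a b, a ≤ b → b ≤ m → S a ≤ S b := by
    intro a b hab
    induction b, hab using Nat.le_induction with
    | base => exact fun _ => le_rfl
    | succ b _ ih => exact fun hb => (ih (by omega)).trans (hS b (by omega)).le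
  by_cases hex : ∃ j < m, S j ≤ (k : ℝ) / n ∧ (k : ℝ) / n < S (j + 1)
  · obtain ⟨j, hj, h1, h2⟩ := hex
    have hSe : S j ≤ eps n (S j) := by
      rw [eps, le_div_iff₀ hn, mul_comm]; exact Int.le_ceil _
    have hek : eps n (S j) ≤ (k : ℝ) / n := by
      unfold eps
      refine div_le_div_of_nonneg_right ?_ hn.le
      have : ⌈(n : ℝ) * S j⌉ ≤ (k : ℤ) := by
        rw [Int.ceil_le]
        rw [le_div_iff₀ hn, mul_comm] at h1
        exact_mod_cast h1
      exact_mod_cast this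
    refine Or.inr ⟨eps n (S j), ⟨?_, hek.trans (grid_mem hk.le).2⟩, hek, ?_, fun q => ?_⟩
    · exact (h0.trans (mono 0 j (Nat.zero_le j) hj.le)).trans hSe
    · have := hd j hj
      linarith
    · ext ω
      rw [cell, Finset.sum_eq_single j]
      · rw [if_pos ⟨h1, h2⟩]
      · intro b hb hbj
        rw [Finset.mem_range] at hb
        refine if_neg fun hc => ?_
        rcases lt_or_gt_of_ne hbj with hlt | hlt
        · linarith [mono (b + 1) j hlt hj.le, hc.2]
        · linarith [mono (j + 1) b hlt hb.le, hc.1]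
      · exact fun hc => absurd (Finset.mem_range.2 hj) hc
  · push Not at hex
    refine Or.inl fun q => ?_
    ext ω
    refine Finset.sum_eq_zero fun j hj => if_neg fun hc => ?_
    exact absurd hc.2 (not_lt.2 (hex j (Finset.mem_range.1 hj) hc.1))

/-- Two-sided form of the covariance estimates; it covers both regimes of `|q - q'|` because
`binSum` vanishes when `|q - q'| > 2 i`. -/
lemma abs_theta_le {ν : ℝ} (hν : 0 < ν) (hν2 : ν ≤ 1 / 2) {ℓ : ℕ} {P : Measure Ω}
    [IsProbabilityMeasure P] {x : ℝ → Ω → ℝ} (h : IsFBM P ν x) {i q q' : ℕ} (hi : i < ℓ)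
    (hq : ℓ ≤ q) (hq' : ℓ ≤ q') {n m : ℕ} (hm : 1 ≤ m) (hmn : m ≤ n) {S : ℕ → ℝ} (h0 : 0 ≤ S 0)
    (hS : ∀ j < m, S j < S (j + 1)) (hd : ∀ j < m, S (j + 1) - S j ≤ 1 / m) :
    |∫ ω, (∑ j ∈ Finset.range m,
        Jtwo n (xlift x i) (hermIncr x ν n q) (S j) (S (j + 1)) ω) *
      (∑ j ∈ Finset.range m,
        Jtwo n (xlift x i) (hermIncr x ν n q') (S j) (S (j + 1)) ω) ∂P| ≤
      2 * comb (2 * ℓ) * ((n : ℝ) * (m : ℝ) ^ (-(2 * (i : ℝ) * ν)) + (n : ℝ) ^ (1 - ν)) *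
        binSum q q' i := by
  have hn : (0 : ℝ) < n := by exact_mod_cast hm.trans hmn
  have hm0 : (0 : ℝ) < m := by exact_mod_cast hm
  have hβ : 0 ≤ (n : ℝ) ^ (-ν) := by positivity
  have hβ1 : (n : ℝ) ^ (-ν) ≤ 1 :=
    Real.rpow_le_one_of_one_le_of_nonpos (by exact_mod_cast hm.trans hmn) (by linarith)
  have hs : 0 ≤ (m : ℝ) ^ (-ν) := by positivity
  have hs1 : (m : ℝ) ^ (-ν) ≤ 1 :=
    Real.rpow_le_one_of_one_le_of_nonpos (by exact_mod_cast hm) (by linarith)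
  set D : ℝ := comb (2 * ℓ) * (((m : ℝ) ^ (-ν)) ^ (i + i) + (n : ℝ) ^ (-ν)) * binSum q q' i
    with hDdef
  have hD : 0 ≤ D :=
    mul_nonneg (mul_nonneg (comb_nonneg _) (by positivity)) (binSum_nonneg _ _ _)
  simp only [sum_Jtwo_eq]
  calc _ ≤ ∑ k ∈ Finset.range n, ∑ l ∈ Finset.range n, |rho ν ((k : ℤ) - l)| * D := by
        have key : ∀ k < n, ∀ l < n,
            Integrable (fun ω => cell x ν n m S i q k ω * cell x ν n m S i q' l ω) P ∧
            |∫ ω, cell x ν n m S i q k ω * cell x ν n m S i q' l ω ∂P| ≤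
              |rho ν ((k : ℤ) - l)| * D := by
          intro k hk l hl
          have hnn : 0 ≤ |rho ν ((k : ℤ) - l)| * D := mul_nonneg (abs_nonneg _) hD
          rcases cell_cases x ν i hk h0 hS hd with hz | ⟨u, hu, huk, hum, heq⟩
          · simp only [hz, zero_mul, integral_zero, abs_zero]
            exact ⟨integrable_zero _ _ _, hnn⟩
          rcases cell_cases x ν i hl h0 hS hd with hz | ⟨w, hw, hwl, hwm, heq'⟩
          · simp only [hz, mul_zero, integral_zero, abs_zero]
            exact ⟨integrable_zero _ _ _, hnn⟩
          simp only [heq, heq']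
          refine ⟨h.term_integrable hν hk hl hu hw q q' i, ?_⟩
          refine (h.term_bound hν hν2 hm hk hl hu hw huk hwl hum hwm q q' i).trans ?_
          refine (diag_le (abs_nonneg _) (abs_rho_le_one hν hν2 _) hβ hβ1 hs hs1 hq hq' hi).trans
            (le_of_eq ?_)
          rw [hDdef]; ring
        exact abs_integral_sum_mul_sum_le (fun k hk l hl => (key k hk l hl).1)
          (fun k hk l hl => (key k hk l hl).2)
    _ ≤ ∑ k ∈ Finset.range n, 2 * D := by
        refine Finset.sum_le_sum fun k hk => ?_
        rw [← Finset.sum_mul]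
        exact mul_le_mul_of_nonneg_right (sum_abs_rho hν hν2 (Finset.mem_range.1 hk)) hD
    _ = _ := by
        have e1 : ((m : ℝ) ^ (-ν)) ^ (i + i) = (m : ℝ) ^ (-(2 * (i : ℝ) * ν)) := by
          rw [← Real.rpow_natCast, ← Real.rpow_mul hm0.le]
          congr 1; push_cast; ring
        have e2 : (n : ℝ) ^ (1 - ν) = n * (n : ℝ) ^ (-ν) := by
          rw [sub_eq_add_neg, Real.rpow_add hn, Real.rpow_one]
        rw [Finset.sum_const, Finset.card_range, nsmul_eq_mul, hDdef, e1, e2]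
        ring

/-- **Covariance estimates for coarse-grained Hermite sums** (Lemma 5.3): bounds on
`ϑ(q,q',i) = E[(∑_j ζ^{i,q}_j)(∑_{j'} ζ^{i,q'}_{j'})]`, with a constant depending only
on `ν` and `ℓ`; and `ϑ(q,q',i) = 0` when `|q-q'| > 2i`. -/
theorem theta_estimates
    (ν : ℝ) (hν : 0 < ν) (hν2 : ν ≤ 1 / 2)
    (ℓ : ℕ) (hℓ1 : (ℓ : ℝ) - 1 ≤ 1 / (2 * ν)) (hℓ2 : 1 / (2 * ν) < ℓ) :
    ∃ K : ℝ,
      ∀ (Ω : Type) (_ : MeasurableSpace Ω) (P : Measure Ω), IsProbabilityMeasure P →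
      ∀ x : ℝ → Ω → ℝ, IsFBM P ν x →
      ∀ i : ℕ, 1 ≤ i → i ≤ ℓ - 1 →
      ∀ q q' : ℕ, ℓ ≤ q → ℓ ≤ q' →
      ∀ n m : ℕ, 1 ≤ m → m ≤ n →
      ∀ S : ℕ → ℝ, 0 ≤ S 0 → S m ≤ 1 →
        (∀ j < m, S j < S (j + 1)) → (∀ j < m, S (j + 1) - S j ≤ 1 / m) →
        ((((q : ℤ) - (q' : ℤ)).natAbs ≤ 2 * i →
          (∫ ω, (∑ j ∈ Finset.range m,
              Jtwo n (xlift x i) (hermIncr x ν n q) (S j) (S (j + 1)) ω) *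
            (∑ j ∈ Finset.range m,
              Jtwo n (xlift x i) (hermIncr x ν n q') (S j) (S (j + 1)) ω) ∂P)
            ≤ K * ((n : ℝ) ^ (1 - 2 * ν) + (n : ℝ) * (m : ℝ) ^ (-(2 * (i : ℝ) * ν))
                + (n : ℝ) ^ (1 - ν)) *
              ∑ r ∈ Finset.range (min q q' + 1),
                (if ((q : ℝ) + (q' : ℝ)) / 2 - (i : ℝ) ≤ (r : ℝ) then
                  (Nat.factorial r : ℝ) * (Nat.choose q r : ℝ) * (Nat.choose q' r : ℝ)
                else 0)) ∧
        (2 * i < (((q : ℤ) - (q' : ℤ)).natAbs) →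
          (∫ ω, (∑ j ∈ Finset.range m,
              Jtwo n (xlift x i) (hermIncr x ν n q) (S j) (S (j + 1)) ω) *
            (∑ j ∈ Finset.range m,
              Jtwo n (xlift x i) (hermIncr x ν n q') (S j) (S (j + 1)) ω) ∂P) = 0)) := by
  -- `2` bounds `∑ₗ |ρ(k-l)|`, and `comb (2ℓ)` the weights of at most `2i < 2ℓ` factors
  refine ⟨2 * comb (2 * ℓ), fun Ω _ P hP x hx i hi1 hi q q' hq hq' n m hm hmn S h0 _ hS hd => ?_⟩
  have hb := abs_theta_le hν hν2 hx (show i < ℓ by omega) hq hq' hm hmn h0 hS hd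
  refine ⟨fun _ => ?_, fun hfar => ?_⟩
  · refine (le_abs_self _).trans (hb.trans ?_)
    have hK := comb_nonneg (2 * ℓ)
    have hn : (0 : ℝ) ≤ (n : ℝ) ^ (1 - 2 * ν) := by positivity
    refine mul_le_mul_of_nonneg_right (mul_le_mul_of_nonneg_left ?_ (by positivity))
      (binSum_nonneg q q' i)
    linarith
  · rw [binSum_eq_zero hfar, mul_zero] at hb
    exact abs_nonpos_iff.1 hb

end
end
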